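/- arXiv:2110.03911 — 11 statements merged into one kernel-verified Lean document; each statement's English description precedes it below -/
import Mathlib

section
/- For all τ, t ∈ [a,b] one has |G(τ,t)| ≤ (ψ(b)−ψ(a))^{α+β−1}/Γ(α+β); i.e., the Green function G is uniformly bounded on [a,b]×[a,b] by L^{α+β−1}/Γ(α+β). -/
open MeasureTheory Set

/-- The Green function of the sequential fractional boundary value problem. -/
noncomputable def G (a b α β : ℝ) (ψ : ℝ → ℝ) (τ t : ℝ) : ℝ :=
  if τ ≤ t then
    (ψ t - ψ a) ^ β * (ψ b - ψ τ) ^ (α + β - 1) /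
        (Real.Gamma (α + β) * (ψ b - ψ a) ^ β) -
      (ψ t - ψ τ) ^ (α + β - 1) / Real.Gamma (α + β)
  else
    (ψ t - ψ a) ^ β * (ψ b - ψ τ) ^ (α + β - 1) /
      (Real.Gamma (α + β) * (ψ b - ψ a) ^ β)

theorem green_function_uniform_bound
    (a b α β : ℝ) (hab : a < b)
    (hα0 : 0 < α) (hα1 : α ≤ 1) (hβ0 : 0 < β) (hβ1 : β ≤ 1) (hαβ : 1 < α + β)
    (ψ ψd : ℝ → ℝ)
    (hψ : ∀ t ∈ Set.Icc a b, HasDerivAt ψ (ψd t) t)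
    (hψd_cont : ContinuousOn ψd (Set.Icc a b))
    (hψd_pos : ∀ t ∈ Set.Icc a b, 0 < ψd t) :
    ∀ τ ∈ Set.Icc a b, ∀ t ∈ Set.Icc a b,
      |G a b α β ψ τ t| ≤ (ψ b - ψ a) ^ (α + β - 1) / Real.Gamma (α + β) := by
  intro τ hτ t ht
  have hmono : MonotoneOn ψ (Set.Icc a b) := by
    apply monotoneOn_of_deriv_nonneg (convex_Icc a b)
    · exact fun x hx => (hψ x hx).continuousAt.continuousWithinAt
    · exact fun x hx =>
        (hψ x (interior_subset hx)).differentiableAt.differentiableWithinAt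
    · intro x hx
      rw [(hψ x (interior_subset hx)).deriv]
      exact (hψd_pos x (interior_subset hx)).le
  have ha : a ∈ Set.Icc a b := ⟨le_rfl, hab.le⟩
  have hb : b ∈ Set.Icc a b := ⟨hab.le, le_rfl⟩
  have hat := hmono ha ht ht.1
  have htb := hmono ht hb ht.2
  have haτ := hmono ha hτ hτ.1
  have hτb := hmono hτ hb hτ.2
  have hΓ : 0 < Real.Gamma (α + β) := Real.Gamma_pos_of_pos (by linarith)
  have hs : 0 ≤ α + β - 1 := by linarith
  have hX0 : 0 ≤ (ψ t - ψ a) ^ β * (ψ b - ψ τ) ^ (α + β - 1) /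
      (Real.Gamma (α + β) * (ψ b - ψ a) ^ β) := by
    have h1 := Real.rpow_nonneg (sub_nonneg.2 hat) β
    have h2 := Real.rpow_nonneg (sub_nonneg.2 hτb) (α + β - 1)
    have h3 := Real.rpow_nonneg (sub_nonneg.2 (hat.trans htb)) β
    positivity
  have hX1 : (ψ t - ψ a) ^ β * (ψ b - ψ τ) ^ (α + β - 1) /
      (Real.Gamma (α + β) * (ψ b - ψ a) ^ β) ≤
      (ψ b - ψ a) ^ (α + β - 1) / Real.Gamma (α + β) := by
    have h1 := Real.rpow_nonneg (sub_nonneg.2 hat) β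
    have h2 := Real.rpow_nonneg (sub_nonneg.2 hτb) (α + β - 1)
    have h3 := Real.rpow_nonneg (sub_nonneg.2 (hat.trans htb)) β
    have h4 : (ψ t - ψ a) ^ β ≤ (ψ b - ψ a) ^ β :=
      Real.rpow_le_rpow (sub_nonneg.2 hat) (by linarith) hβ0.le
    have h5 : (ψ b - ψ τ) ^ (α + β - 1) ≤ (ψ b - ψ a) ^ (α + β - 1) :=
      Real.rpow_le_rpow (sub_nonneg.2 hτb) (by linarith) hs
    have h6 : (ψ t - ψ a) ^ β / (ψ b - ψ a) ^ β ≤ 1 := div_le_one_of_le₀ h4 h3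
    calc _ = ((ψ t - ψ a) ^ β / (ψ b - ψ a) ^ β) *
          ((ψ b - ψ τ) ^ (α + β - 1) / Real.Gamma (α + β)) := by
            rw [div_mul_div_comm, mul_comm (Real.Gamma _)]
      _ ≤ 1 * ((ψ b - ψ τ) ^ (α + β - 1) / Real.Gamma (α + β)) :=
          mul_le_mul_of_nonneg_right h6 (div_nonneg h2 hΓ.le)
      _ ≤ _ := by
          rw [one_mul]
          exact div_le_div_of_nonneg_right h5 hΓ.le
  unfold G
  split_ifs with h
  · have hτt := hmono hτ ht h
    have hY0 : 0 ≤ (ψ t - ψ τ) ^ (α + β - 1) / Real.Gamma (α + β) :=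
      div_nonneg (Real.rpow_nonneg (sub_nonneg.2 hτt) _) hΓ.le
    have hY1 : (ψ t - ψ τ) ^ (α + β - 1) / Real.Gamma (α + β) ≤
        (ψ b - ψ a) ^ (α + β - 1) / Real.Gamma (α + β) :=
      div_le_div_of_nonneg_right
        (Real.rpow_le_rpow (sub_nonneg.2 hτt) (by linarith) hs) hΓ.le
    rw [abs_le]
    constructor <;> linarith
  · rw [abs_of_nonneg hX0]
    exact hX1
end

section
/- The maximum of g₂(τ,t) over the region {(τ,t) : a ≤ t ≤ τ ≤ b} equals (L^{α+β−1}/Γ(α+β)) · β^β·(α+β−1)^{α+β−1}/(α+2β−1)^{α+2β−1}, and it is attained at the point t = τ = τ₀, where τ₀ ∈ (a,b) is the unique point with ψ(τ₀) = (β·ψ(b) + (α+β−1)·ψ(a))/(α+2β−1). -/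
open MeasureTheory Set

/-- The function `g₂(τ,t) = C·(ψ(t)−ψ(a))^β·(ψ(b)−ψ(τ))^{α+β−1}`,
with `C = 1/(Γ(α+β)·(ψ(b)−ψ(a))^β)`. -/
noncomputable def g₂ (a b α β : ℝ) (ψ : ℝ → ℝ) (τ t : ℝ) : ℝ :=
  (ψ t - ψ a) ^ β * (ψ b - ψ τ) ^ (α + β - 1) /
    (Real.Gamma (α + β) * (ψ b - ψ a) ^ β)

theorem aux_amgm (p q x y L : ℝ) (hp : 0 < p) (hq : 0 < q) (hx : 0 ≤ x) (hy : 0 ≤ y)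
    (hL : x + y ≤ L) :
    x ^ p * y ^ q ≤ L ^ (p + q) * (p ^ p * q ^ q / (p + q) ^ (p + q)) := by
  have hpq : 0 < p + q := by linarith
  have hL0 : 0 ≤ L := by linarith
  have h := Real.geom_mean_le_arith_mean2_weighted (w₁ := p / (p + q)) (w₂ := q / (p + q))
    (p₁ := x / p) (p₂ := y / q) (by positivity) (by positivity) (by positivity) (by positivity)
    (by field_simp)
  have h2 : p / (p + q) * (x / p) + q / (p + q) * (y / q) ≤ L / (p + q) := by
    have : p / (p + q) * (x / p) + q / (p + q) * (y / q) = (x + y) / (p + q) := by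
      field_simp
    rw [this]
    gcongr
  have h3 := Real.rpow_le_rpow (by positivity) (h.trans h2) hpq.le
  rw [Real.mul_rpow (by positivity) (by positivity), ← Real.rpow_mul (by positivity),
    ← Real.rpow_mul (by positivity), div_mul_cancel₀ _ hpq.ne', div_mul_cancel₀ _ hpq.ne',
    Real.div_rpow hx hp.le, Real.div_rpow hy hq.le, Real.div_rpow hL0 hpq.le] at h3
  have e1 : 0 < p ^ p := by positivity
  have e2 : 0 < q ^ q := by positivity
  calc x ^ p * y ^ q = (x ^ p / p ^ p * (y ^ q / q ^ q)) * (p ^ p * q ^ q) := by field_simp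
    _ ≤ (L ^ (p + q) / (p + q) ^ (p + q)) * (p ^ p * q ^ q) := by gcongr
    _ = _ := by ring

theorem aux_eq (p q L : ℝ) (hp : 0 < p) (hq : 0 < q) (hL : 0 < L) :
    (L * p / (p + q)) ^ p * (L * q / (p + q)) ^ q
      = L ^ (p + q) * (p ^ p * q ^ q / (p + q) ^ (p + q)) := by
  have hpq : 0 < p + q := by linarith
  rw [Real.div_rpow (by positivity) hpq.le, Real.div_rpow (by positivity) hpq.le,
    Real.mul_rpow hL.le hp.le, Real.mul_rpow hL.le hq.le, Real.rpow_add hL, Real.rpow_add hpq]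
  field_simp

theorem g₂_max
    (a b α β : ℝ) (hab : a < b)
    (hα0 : 0 < α) (hα1 : α ≤ 1) (hβ0 : 0 < β) (hβ1 : β ≤ 1) (hαβ : 1 < α + β)
    (ψ ψd : ℝ → ℝ)
    (hψ : ∀ t ∈ Set.Icc a b, HasDerivAt ψ (ψd t) t)
    (hψd_cont : ContinuousOn ψd (Set.Icc a b))
    (hψd_pos : ∀ t ∈ Set.Icc a b, 0 < ψd t) :
    ∃ τ₀ ∈ Set.Ioo a b,
      ψ τ₀ = (β * ψ b + (α + β - 1) * ψ a) / (α + 2 * β - 1) ∧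
      (∀ τ' ∈ Set.Ioo a b,
        ψ τ' = (β * ψ b + (α + β - 1) * ψ a) / (α + 2 * β - 1) → τ' = τ₀) ∧
      g₂ a b α β ψ τ₀ τ₀ =
        (ψ b - ψ a) ^ (α + β - 1) / Real.Gamma (α + β) *
          (β ^ β * (α + β - 1) ^ (α + β - 1) / (α + 2 * β - 1) ^ (α + 2 * β - 1)) ∧
      ∀ τ t, a ≤ t → t ≤ τ → τ ≤ b →
        g₂ a b α β ψ τ t ≤
          (ψ b - ψ a) ^ (α + β - 1) / Real.Gamma (α + β) *
            (β ^ β * (α + β - 1) ^ (α + β - 1) / (α + 2 * β - 1) ^ (α + 2 * β - 1)) := by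
  have hmono : StrictMonoOn ψ (Set.Icc a b) := by
    apply strictMonoOn_of_deriv_pos (convex_Icc a b)
    · exact fun t ht => (hψ t ht).continuousAt.continuousWithinAt
    · intro t ht
      have ht' := interior_subset ht
      rw [(hψ t ht').deriv]
      exact hψd_pos t ht'
  have ha : a ∈ Set.Icc a b := ⟨le_rfl, hab.le⟩
  have hb : b ∈ Set.Icc a b := ⟨hab.le, le_rfl⟩
  have hL : 0 < ψ b - ψ a := sub_pos.2 (hmono ha hb hab)
  have hq : 0 < α + β - 1 := by linarith
  have hs : 0 < α + 2 * β - 1 := by linarith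
  have hse : α + 2 * β - 1 = β + (α + β - 1) := by ring
  have hΓ : 0 < Real.Gamma (α + β) := Real.Gamma_pos_of_pos (by linarith)
  have hLb : 0 < (ψ b - ψ a) ^ β := Real.rpow_pos_of_pos hL _
  have key : ∀ K : ℝ, (ψ b - ψ a) ^ (β + (α + β - 1)) * K /
      (Real.Gamma (α + β) * (ψ b - ψ a) ^ β)
      = (ψ b - ψ a) ^ (α + β - 1) / Real.Gamma (α + β) * K := by
    intro K
    rw [Real.rpow_add hL]
    field_simp
  have hmem : (β * ψ b + (α + β - 1) * ψ a) / (α + 2 * β - 1) ∈ Set.Ioo (ψ a) (ψ b) := by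
    constructor
    · rw [lt_div_iff₀ hs]; nlinarith
    · rw [div_lt_iff₀ hs]; nlinarith
  obtain ⟨τ₀, hτ₀, hτe⟩ := intermediate_value_Ioo hab.le
    (fun t ht => (hψ t ht).continuousAt.continuousWithinAt) hmem
  refine ⟨τ₀, hτ₀, hτe, ?_, ?_, ?_⟩
  · intro τ' hτ' h
    exact hmono.injOn (Set.Ioo_subset_Icc_self hτ') (Set.Ioo_subset_Icc_self hτ₀)
      (h.trans hτe.symm)
  · have e1 : ψ τ₀ - ψ a = (ψ b - ψ a) * β / (β + (α + β - 1)) := by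
      rw [hτe, ← hse, eq_div_iff hs.ne', sub_mul, div_mul_cancel₀ _ hs.ne']; ring
    have e2 : ψ b - ψ τ₀ = (ψ b - ψ a) * (α + β - 1) / (β + (α + β - 1)) := by
      rw [hτe, ← hse, eq_div_iff hs.ne', sub_mul, div_mul_cancel₀ _ hs.ne']; ring
    rw [g₂, e1, e2, aux_eq β (α + β - 1) _ hβ0 hq hL, key, hse]
  · intro τ t h1 h2 h3
    have ht : t ∈ Set.Icc a b := ⟨h1, h2.trans h3⟩
    have hτ : τ ∈ Set.Icc a b := ⟨h1.trans h2, h3⟩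
    have m1 := hmono.monotoneOn ha ht h1
    have m2 := hmono.monotoneOn ht hτ h2
    have m3 := hmono.monotoneOn hτ hb h3
    rw [hse, ← key, g₂]
    apply div_le_div_of_nonneg_right _ (by positivity)
    exact aux_amgm β (α + β - 1) _ _ _ hβ0 hq (by linarith) (by linarith) (by linarith)
end

section
/- For each fixed t ∈ [a,b], the function τ ↦ g₁(τ,t) is monotone nondecreasing on the interval [a,t]; consequently, for each t, max over τ ∈ [a,t] of |g₁(τ,t)| equals max{|g₁(a,t)|, |g₁(t,t)|}. -/
open MeasureTheory Set

/-- The function `g₁(τ,t) = C·(ψ(t)−ψ(a))^β·(ψ(b)−ψ(τ))^{α+β−1} − D·(ψ(t)−ψ(τ))^{α+β−1}`,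
with `C = 1/(Γ(α+β)·(ψ(b)−ψ(a))^β)` and `D = 1/Γ(α+β)`. -/
noncomputable def g₁ (a b α β : ℝ) (ψ : ℝ → ℝ) (τ t : ℝ) : ℝ :=
  (ψ t - ψ a) ^ β * (ψ b - ψ τ) ^ (α + β - 1) /
      (Real.Gamma (α + β) * (ψ b - ψ a) ^ β) -
    (ψ t - ψ τ) ^ (α + β - 1) / Real.Gamma (α + β)

theorem rpow_increment_le (p u v s : ℝ) (hp0 : 0 ≤ p) (hp1 : p ≤ 1) (hv : 0 ≤ v) (huv : v ≤ u)
    (hs : 0 ≤ s) : (u + s) ^ p - (v + s) ^ p ≤ u ^ p - v ^ p := by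
  rcases eq_or_lt_of_le (show v ≤ u + s by linarith) with h | h
  · have h1 : s = 0 := by linarith
    subst h1
    simp
  have hc := (Real.concaveOn_rpow hp0 hp1).2
  have hd : 0 < u + s - v := by linarith
  have hmv : v ∈ Set.Ici (0:ℝ) := hv
  have hmu : u + s ∈ Set.Ici (0:ℝ) := Set.mem_Ici.2 (by linarith)
  have hl0 : 0 ≤ s / (u + s - v) := by positivity
  have hm0 : 0 ≤ (u - v) / (u + s - v) := div_nonneg (by linarith) hd.le
  have hsum : s / (u + s - v) + (u - v) / (u + s - v) = 1 := by
    rw [← add_div, div_eq_one_iff_eq hd.ne']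
    ring
  have h1 := hc hmv hmu hl0 hm0 hsum
  have h2 := hc hmv hmu hm0 hl0 (by linarith)
  simp only [smul_eq_mul] at h1 h2
  have e1 : s / (u + s - v) * v + (u - v) / (u + s - v) * (u + s) = u := by
    field_simp
    ring
  have e2 : (u - v) / (u + s - v) * v + s / (u + s - v) * (u + s) = v + s := by
    field_simp
    ring
  rw [e1] at h1
  rw [e2] at h2
  have e3 : (u - v) / (u + s - v) = 1 - s / (u + s - v) := by linarith
  rw [e3] at h1 h2
  linarith

theorem g₁_monotone_and_abs_max
    (a b α β : ℝ) (hab : a < b)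
    (hα0 : 0 < α) (hα1 : α ≤ 1) (hβ0 : 0 < β) (hβ1 : β ≤ 1) (hαβ : 1 < α + β)
    (ψ ψd : ℝ → ℝ)
    (hψ : ∀ t ∈ Set.Icc a b, HasDerivAt ψ (ψd t) t)
    (hψd_cont : ContinuousOn ψd (Set.Icc a b))
    (hψd_pos : ∀ t ∈ Set.Icc a b, 0 < ψd t) :
    ∀ t ∈ Set.Icc a b,
      MonotoneOn (fun τ => g₁ a b α β ψ τ t) (Set.Icc a t) ∧
      IsGreatest ((fun τ => |g₁ a b α β ψ τ t|) '' Set.Icc a t)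
        (max |g₁ a b α β ψ a t| |g₁ a b α β ψ t t|) := by
  intro t ht
  have hmono : StrictMonoOn ψ (Set.Icc a b) := by
    apply strictMonoOn_of_deriv_pos (convex_Icc a b)
    · exact fun x hx => (hψ x hx).continuousAt.continuousWithinAt
    · intro x hx
      have hx' := interior_subset hx
      rw [(hψ x hx').deriv]
      exact hψd_pos x hx'
  have hm := hmono.monotoneOn
  have ha : a ∈ Set.Icc a b := ⟨le_rfl, hab.le⟩
  have hb : b ∈ Set.Icc a b := ⟨hab.le, le_rfl⟩
  have hL : 0 < ψ b - ψ a := sub_pos.2 (hmono ha hb hab)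
  have hat : 0 ≤ ψ t - ψ a := sub_nonneg.2 (hm ha ht ht.1)
  have htb : 0 ≤ ψ b - ψ t := sub_nonneg.2 (hm ht hb ht.2)
  have hG : 0 < Real.Gamma (α + β) := Real.Gamma_pos_of_pos (by linarith)
  have hLb : 0 < (ψ b - ψ a) ^ β := Real.rpow_pos_of_pos hL β
  have hg : ∀ τ, g₁ a b α β ψ τ t = ((ψ t - ψ a) ^ β / (ψ b - ψ a) ^ β *
      (ψ b - ψ τ) ^ (α + β - 1) - (ψ t - ψ τ) ^ (α + β - 1)) / Real.Gamma (α + β) := by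
    intro τ
    unfold g₁
    field_simp
  have hk1 : (ψ t - ψ a) ^ β / (ψ b - ψ a) ^ β ≤ 1 := by
    rw [div_le_one hLb]
    exact Real.rpow_le_rpow hat (by linarith) hβ0.le
  have hM : MonotoneOn (fun τ => g₁ a b α β ψ τ t) (Set.Icc a t) := by
    intro x hx y hy hxy
    simp only [hg]
    apply div_le_div_of_nonneg_right _ hG.le
    have hxb : x ∈ Set.Icc a b := ⟨hx.1, hx.2.trans ht.2⟩
    have hyb : y ∈ Set.Icc a b := ⟨hy.1, hy.2.trans ht.2⟩
    have h1 := hm hxb hyb hxy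
    have h2 := hm hyb ht hy.2
    have h3 := rpow_increment_le (α + β - 1) (ψ t - ψ x) (ψ t - ψ y) (ψ b - ψ t)
      (by linarith) (by linarith) (by linarith) (by linarith) htb
    rw [show ψ t - ψ x + (ψ b - ψ t) = ψ b - ψ x by ring,
      show ψ t - ψ y + (ψ b - ψ t) = ψ b - ψ y by ring] at h3
    have h4 : (ψ b - ψ y) ^ (α + β - 1) ≤ (ψ b - ψ x) ^ (α + β - 1) :=
      Real.rpow_le_rpow (by linarith) (by linarith) (by linarith)
    have h5 := mul_le_mul_of_nonneg_right hk1 (sub_nonneg.2 h4)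
    linarith
  have hat' : a ∈ Set.Icc a t := ⟨le_rfl, ht.1⟩
  have htt : t ∈ Set.Icc a t := ⟨ht.1, le_rfl⟩
  refine ⟨hM, ?_, ?_⟩
  · rcases max_choice |g₁ a b α β ψ a t| |g₁ a b α β ψ t t| with h | h
    · rw [h]
      exact ⟨a, hat', rfl⟩
    · rw [h]
      exact ⟨t, htt, rfl⟩
  · rintro _ ⟨τ, hτ, rfl⟩
    exact abs_le_max_abs_abs (hM hat' hτ hτ.1) (hM hτ htt hτ.2)
end

section
/- The function h(t) = g₁(a,t) satisfies h(t) ≤ 0 for all t ∈ [a,b], and h(a) = h(b) = 0. Moreover, if α < 1, then the maximum of |h| over [a,b] equals (L^{α+β−1}/Γ(α+β)) · ((1−α)/β) · ((α+β−1)/β)^{(α+β−1)/(1−α)}, attained at the unique t₀ ∈ (a,b) with ψ(t₀) = ψ(a) + ((α+β−1)/β)^{1/(1−α)}·L. -/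
open MeasureTheory Set

/-- The function `h(t) = g₁(a,t) = C·(ψ(t)−ψ(a))^β·L^{α+β−1} − D·(ψ(t)−ψ(a))^{α+β−1}`,
with `L = ψ(b)−ψ(a)`, `C = 1/(Γ(α+β)·L^β)` and `D = 1/Γ(α+β)`. -/
noncomputable def hFun (a b α β : ℝ) (ψ : ℝ → ℝ) (t : ℝ) : ℝ :=
  (ψ t - ψ a) ^ β * (ψ b - ψ a) ^ (α + β - 1) /
      (Real.Gamma (α + β) * (ψ b - ψ a) ^ β) -
    (ψ t - ψ a) ^ (α + β - 1) / Real.Gamma (α + β)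

theorem hFun_scale (a b α β : ℝ) (ψ : ℝ → ℝ) (t u : ℝ) (hL : 0 < ψ b - ψ a) (hu : 0 ≤ u)
    (h : ψ t - ψ a = u * (ψ b - ψ a)) :
    hFun a b α β ψ t =
      -((ψ b - ψ a) ^ (α + β - 1) / Real.Gamma (α + β) * (u ^ (α + β - 1) - u ^ β)) := by
  unfold hFun
  rw [h, Real.mul_rpow hu hL.le, Real.mul_rpow hu hL.le]
  have h1 : (ψ b - ψ a) ^ β ≠ 0 := (Real.rpow_pos_of_pos hL _).ne'
  have h2 : u ^ β * (ψ b - ψ a) ^ β * (ψ b - ψ a) ^ (α + β - 1) /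
      (Real.Gamma (α + β) * (ψ b - ψ a) ^ β) =
      u ^ β * (ψ b - ψ a) ^ (α + β - 1) / Real.Gamma (α + β) := by
    rw [show u ^ β * (ψ b - ψ a) ^ β * (ψ b - ψ a) ^ (α + β - 1) =
      (u ^ β * (ψ b - ψ a) ^ (α + β - 1)) * (ψ b - ψ a) ^ β by ring]
    exact mul_div_mul_right _ _ h1
  rw [h2]
  ring

theorem aux_bound (α β u : ℝ) (hα1 : α < 1) (hβ0 : 0 < β) (hαβ : 1 < α + β) (hu : 0 ≤ u) :
    u ^ (α + β - 1) - u ^ β ≤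
      ((1 - α) / β) * ((α + β - 1) / β) ^ ((α + β - 1) / (1 - α)) := by
  set r := (α + β - 1) / β with hr
  have hr0 : 0 < r := div_pos (by linarith) hβ0
  have h1r : (1 - α) / β = 1 - r := by rw [hr]; field_simp; ring
  have h1α : 0 < 1 - α := by linarith
  have h1r0 : 0 < 1 - r := by rw [← h1r]; positivity
  set M := r ^ ((α + β - 1) / (1 - α)) with hM
  have hc : r ^ (β / (1 - α)) = r * M := by
    rw [hM, show β / (1 - α) = 1 + (α + β - 1) / (1 - α) by field_simp; ring,
      Real.rpow_add hr0, Real.rpow_one]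
  have key := Real.geom_mean_le_arith_mean2_weighted hr0.le h1r0.le
    (Real.rpow_nonneg hu β) (Real.rpow_nonneg hr0.le (β / (1 - α))) (by ring)
  rw [← Real.rpow_mul hu, ← Real.rpow_mul hr0.le, ← h1r,
    show β / (1 - α) * ((1 - α) / β) = 1 by field_simp,
    show β * r = α + β - 1 by rw [hr]; field_simp, Real.rpow_one, hc, h1r] at key
  rw [h1r]
  have : r * (u ^ (α + β - 1) - u ^ β) ≤ r * ((1 - r) * M) := by nlinarith
  exact le_of_mul_le_mul_left this hr0

theorem hFun_nonpos_and_abs_max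
    (a b α β : ℝ) (hab : a < b)
    (hα0 : 0 < α) (hα1 : α ≤ 1) (hβ0 : 0 < β) (hβ1 : β ≤ 1) (hαβ : 1 < α + β)
    (ψ ψd : ℝ → ℝ)
    (hψ : ∀ t ∈ Set.Icc a b, HasDerivAt ψ (ψd t) t)
    (hψd_cont : ContinuousOn ψd (Set.Icc a b))
    (hψd_pos : ∀ t ∈ Set.Icc a b, 0 < ψd t) :
    (∀ t ∈ Set.Icc a b, hFun a b α β ψ t ≤ 0) ∧
    hFun a b α β ψ a = 0 ∧ hFun a b α β ψ b = 0 ∧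
    (α < 1 →
      ∃ t₀ ∈ Set.Ioo a b,
        ψ t₀ = ψ a + ((α + β - 1) / β) ^ ((1 : ℝ) / (1 - α)) * (ψ b - ψ a) ∧
        (∀ t' ∈ Set.Ioo a b,
          ψ t' = ψ a + ((α + β - 1) / β) ^ ((1 : ℝ) / (1 - α)) * (ψ b - ψ a) →
            t' = t₀) ∧
        |hFun a b α β ψ t₀| =
          (ψ b - ψ a) ^ (α + β - 1) / Real.Gamma (α + β) * ((1 - α) / β) *
            ((α + β - 1) / β) ^ ((α + β - 1) / (1 - α)) ∧
        ∀ t ∈ Set.Icc a b, |hFun a b α β ψ t| ≤ |hFun a b α β ψ t₀|) := by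
  have hcont : ContinuousOn ψ (Set.Icc a b) := fun t ht =>
    (hψ t ht).continuousAt.continuousWithinAt
  have hmono : StrictMonoOn ψ (Set.Icc a b) := by
    apply strictMonoOn_of_deriv_pos (convex_Icc a b) hcont
    intro t ht
    have ht' := interior_subset ht
    rw [(hψ t ht').deriv]
    exact hψd_pos t ht'
  have ha : a ∈ Set.Icc a b := left_mem_Icc.2 hab.le
  have hb : b ∈ Set.Icc a b := right_mem_Icc.2 hab.le
  have hL : 0 < ψ b - ψ a := sub_pos.2 (hmono ha hb hab)
  have hK : 0 < (ψ b - ψ a) ^ (α + β - 1) / Real.Gamma (α + β) :=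
    div_pos (Real.rpow_pos_of_pos hL _) (Real.Gamma_pos_of_pos (by linarith))
  have hu : ∀ t ∈ Set.Icc a b, ∃ u : ℝ, 0 ≤ u ∧ u ≤ 1 ∧ ψ t - ψ a = u * (ψ b - ψ a) := by
    intro t ht
    have h1 := hmono.monotoneOn ha ht ht.1
    have h2 := hmono.monotoneOn ht hb ht.2
    refine ⟨(ψ t - ψ a) / (ψ b - ψ a), div_nonneg (by linarith) hL.le,
      (div_le_one hL).2 (by linarith), ?_⟩
    field_simp
  have hnonpos : ∀ t ∈ Set.Icc a b, hFun a b α β ψ t ≤ 0 := by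
    intro t ht
    obtain ⟨u, hu0, hu1, h⟩ := hu t ht
    rw [hFun_scale a b α β ψ t u hL hu0 h]
    have : u ^ β ≤ u ^ (α + β - 1) := by
      rcases hu0.eq_or_lt with h0 | h0
      · rw [← h0, Real.zero_rpow hβ0.ne', Real.zero_rpow (by linarith)]
      · exact Real.rpow_le_rpow_of_exponent_ge h0 hu1 (by linarith)
    have := mul_nonneg hK.le (sub_nonneg.2 this)
    linarith
  refine ⟨hnonpos, ?_, ?_, ?_⟩
  · rw [hFun_scale a b α β ψ a 0 hL le_rfl (by ring), Real.zero_rpow hβ0.ne',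
      Real.zero_rpow (by linarith)]
    ring
  · rw [hFun_scale a b α β ψ b 1 hL zero_le_one (by ring), Real.one_rpow, Real.one_rpow]
    ring
  intro hα
  have h1α : 0 < 1 - α := by linarith
  set r := (α + β - 1) / β with hr
  have hr0 : 0 < r := div_pos (by linarith) hβ0
  have hr1 : r < 1 := (div_lt_one hβ0).2 (by linarith)
  set u₀ := r ^ ((1 : ℝ) / (1 - α)) with hu₀
  have hu0 : 0 < u₀ := Real.rpow_pos_of_pos hr0 _
  have hu1 : u₀ < 1 := Real.rpow_lt_one hr0.le hr1 (by positivity)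
  have hmem : ψ a + u₀ * (ψ b - ψ a) ∈ Set.Ioo (ψ a) (ψ b) := by
    constructor <;> nlinarith
  obtain ⟨t₀, ht₀, he⟩ := intermediate_value_Ioo hab.le hcont hmem
  have hval : |hFun a b α β ψ t₀| = (ψ b - ψ a) ^ (α + β - 1) / Real.Gamma (α + β) *
      ((1 - α) / β) * r ^ ((α + β - 1) / (1 - α)) := by
    rw [abs_of_nonpos (hnonpos t₀ (Ioo_subset_Icc_self ht₀)),
      hFun_scale a b α β ψ t₀ u₀ hL hu0.le (by rw [he]; ring), hu₀,
      ← Real.rpow_mul hr0.le, ← Real.rpow_mul hr0.le,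
      show 1 / (1 - α) * β = 1 + (α + β - 1) / (1 - α) by field_simp; ring,
      Real.rpow_add hr0, Real.rpow_one, one_div_mul_eq_div,
      show (1 - α) / β = 1 - r by rw [hr]; field_simp; ring]
    ring
  refine ⟨t₀, ht₀, he, ?_, hval, ?_⟩
  · intro t' ht' h'
    exact hmono.injOn (Ioo_subset_Icc_self ht') (Ioo_subset_Icc_self ht₀) (h'.trans he.symm)
  · intro t ht
    obtain ⟨u, hu0, hu1, h⟩ := hu t ht
    rw [hval, abs_of_nonpos (hnonpos t ht), hFun_scale a b α β ψ t u hL hu0 h, neg_neg, mul_assoc]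
    exact mul_le_mul_of_nonneg_left (aux_bound α β u hα hβ0 hαβ hu0) hK.le
end

section
/- For every τ ∈ [a,b] and every t₁, t₂ with a ≤ t₁ ≤ t₂ ≤ b, the Green function satisfies |G(τ,t₂) − G(τ,t₁)| ≤ (2/Γ(α+β)) · (ψ(t₂) − ψ(t₁))^{α+β−1}. -/
open MeasureTheory Set

theorem rpow_sub_le_aux {x y p : ℝ} (hx : 0 ≤ x) (hxy : x ≤ y) (hp : 0 ≤ p) (hp1 : p ≤ 1) :
    y ^ p - x ^ p ≤ (y - x) ^ p := by
  have h := Real.rpow_add_le_add_rpow hx (sub_nonneg.2 hxy) hp hp1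
  rw [add_sub_cancel] at h
  linarith

theorem first_term_aux {x y s L β γ : ℝ} (hx : 0 ≤ x) (hxy : x ≤ y) (hyL : y ≤ L) (hL : 0 < L)
    (hs : 0 ≤ s) (hsL : s ≤ L) (hγ : 0 < γ) (hγβ : γ ≤ β) (hβ1 : β ≤ 1) :
    (y ^ β - x ^ β) * s ^ γ / L ^ β ≤ (y - x) ^ γ := by
  have hd : 0 ≤ y - x := sub_nonneg.2 hxy
  have h1 := rpow_sub_le_aux hx hxy (hγ.le.trans hγβ) hβ1
  have h2 : s ^ γ ≤ L ^ γ := Real.rpow_le_rpow hs hsL hγ.le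
  have h3 : ((y - x) / L) ^ β ≤ ((y - x) / L) ^ γ := by
    rcases hd.eq_or_lt with h | h
    · rw [← h, zero_div, Real.zero_rpow hγ.ne', Real.zero_rpow (hγ.trans_le hγβ).ne']
    · exact Real.rpow_le_rpow_of_exponent_ge (div_pos h hL)
        ((div_le_one hL).2 (by linarith)) hγβ
  rw [Real.div_rpow hd hL.le, Real.div_rpow hd hL.le] at h3
  have hLγ : 0 < L ^ γ := Real.rpow_pos_of_pos hL _
  have hLβ : 0 < L ^ β := Real.rpow_pos_of_pos hL _
  calc (y ^ β - x ^ β) * s ^ γ / L ^ β ≤ (y - x) ^ β * L ^ γ / L ^ β := by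
        gcongr
    _ = (y - x) ^ β / L ^ β * L ^ γ := by ring
    _ ≤ (y - x) ^ γ / L ^ γ * L ^ γ := by gcongr
    _ = (y - x) ^ γ := by field_simp

theorem green_function_continuity_estimate
    (a b α β : ℝ) (hab : a < b)
    (hα0 : 0 < α) (hα1 : α ≤ 1) (hβ0 : 0 < β) (hβ1 : β ≤ 1) (hαβ : 1 < α + β)
    (ψ ψd : ℝ → ℝ)
    (hψ : ∀ t ∈ Set.Icc a b, HasDerivAt ψ (ψd t) t)
    (hψd_cont : ContinuousOn ψd (Set.Icc a b))
    (hψd_pos : ∀ t ∈ Set.Icc a b, 0 < ψd t) :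
    ∀ τ ∈ Set.Icc a b, ∀ t₁ t₂, a ≤ t₁ → t₁ ≤ t₂ → t₂ ≤ b →
      |G a b α β ψ τ t₂ - G a b α β ψ τ t₁| ≤
        2 / Real.Gamma (α + β) * (ψ t₂ - ψ t₁) ^ (α + β - 1) := by
  intro τ hτ t₁ t₂ h1 h12 h2
  have hmono : StrictMonoOn ψ (Set.Icc a b) := by
    apply strictMonoOn_of_deriv_pos (convex_Icc a b)
    · exact fun t ht => (hψ t ht).continuousAt.continuousWithinAt
    · intro t ht
      have ht' := interior_subset ht
      rw [(hψ t ht').deriv]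
      exact hψd_pos t ht'
  have hm := hmono.monotoneOn
  have ha : a ∈ Set.Icc a b := ⟨le_rfl, hab.le⟩
  have hb : b ∈ Set.Icc a b := ⟨hab.le, le_rfl⟩
  have ht1 : t₁ ∈ Set.Icc a b := ⟨h1, h12.trans h2⟩
  have ht2 : t₂ ∈ Set.Icc a b := ⟨h1.trans h12, h2⟩
  have hL : 0 < ψ b - ψ a := sub_pos.2 (hmono ha hb hab)
  have e1 := hm ha ht1 h1
  have e2 := hm ht1 ht2 h12
  have e3 := hm ht2 hb h2
  have e4 := hm ha hτ hτ.1
  have e5 := hm hτ hb hτ.2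
  have hγ : 0 < α + β - 1 := by linarith
  have hA := first_term_aux (x := ψ t₁ - ψ a) (y := ψ t₂ - ψ a) (s := ψ b - ψ τ)
    (L := ψ b - ψ a) (β := β) (γ := α + β - 1) (by linarith) (by linarith) (by linarith) hL
    (by linarith) (by linarith) hγ (by linarith) hβ1
  rw [sub_sub_sub_cancel_right] at hA
  have hA0 : 0 ≤ ((ψ t₂ - ψ a) ^ β - (ψ t₁ - ψ a) ^ β) * (ψ b - ψ τ) ^ (α + β - 1) /
      (ψ b - ψ a) ^ β := by
    apply div_nonneg (mul_nonneg _ (Real.rpow_nonneg (by linarith) _))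
      (Real.rpow_nonneg hL.le _)
    exact sub_nonneg.2 (Real.rpow_le_rpow (by linarith) (by linarith) hβ0.le)
  have hΓ : 0 < Real.Gamma (α + β) := Real.Gamma_pos_of_pos (by linarith)
  have hLβ : 0 < (ψ b - ψ a) ^ β := Real.rpow_pos_of_pos hL _
  have hG : ∀ t, G a b α β ψ τ t = ((ψ t - ψ a) ^ β * (ψ b - ψ τ) ^ (α + β - 1) /
      (ψ b - ψ a) ^ β - (if τ ≤ t then (ψ t - ψ τ) ^ (α + β - 1) else 0)) /
        Real.Gamma (α + β) := by
    intro t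
    unfold G
    split_ifs <;> field_simp <;> ring
  have hB : 0 ≤ (if τ ≤ t₂ then (ψ t₂ - ψ τ) ^ (α + β - 1) else 0) -
        (if τ ≤ t₁ then (ψ t₁ - ψ τ) ^ (α + β - 1) else 0) ∧
      (if τ ≤ t₂ then (ψ t₂ - ψ τ) ^ (α + β - 1) else 0) -
        (if τ ≤ t₁ then (ψ t₁ - ψ τ) ^ (α + β - 1) else 0) ≤ (ψ t₂ - ψ t₁) ^ (α + β - 1) := by
    by_cases c1 : τ ≤ t₁
    · have f1 := hm hτ ht1 c1
      rw [if_pos c1, if_pos (c1.trans h12)]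
      constructor
      · exact sub_nonneg.2 (Real.rpow_le_rpow (by linarith) (by linarith) hγ.le)
      · have := rpow_sub_le_aux (x := ψ t₁ - ψ τ) (y := ψ t₂ - ψ τ) (p := α + β - 1)
          (by linarith) (by linarith) hγ.le (by linarith)
        rwa [sub_sub_sub_cancel_right] at this
    · rw [if_neg c1, sub_zero]
      have f1 := hm ht1 hτ (not_le.1 c1).le
      by_cases c2 : τ ≤ t₂
      · have f2 := hm hτ ht2 c2
        rw [if_pos c2]
        exact ⟨Real.rpow_nonneg (by linarith) _,
          Real.rpow_le_rpow (by linarith) (by linarith) hγ.le⟩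
      · rw [if_neg c2]
        exact ⟨le_rfl, Real.rpow_nonneg (by linarith) _⟩
  obtain ⟨hB0, hB1⟩ := hB
  rw [hG, hG, ← sub_div, abs_div, abs_of_pos hΓ, div_mul_eq_mul_div]
  apply div_le_div_of_nonneg_right _ hΓ.le
  rw [sub_mul, sub_div] at hA hA0
  rw [abs_le]
  constructor <;> linarith
end

section
/- Suppose q: (a,b) → ℝ is measurable and nonnegative with t ↦ ψ'(t)q(t) in L¹(a,b), φ: ℝ → (0,∞) is nondecreasing and concave, |f(t,x)| ≤ q(t)·φ(|x|) for all t ∈ (a,b) and x ∈ ℝ, and |𝒢(x)| ≤ κ·‖x‖ for all x ∈ C([a,b],ℝ) with some κ ∈ (0,1). If x is a mild solution of the problem such that t ↦ f(t,x(t)) is measurable on (a,b), then (1−κ)·‖x‖ ≤ G_max · (∫_a^b ψ'(τ)q(τ) dτ) · φ(‖x‖), where G_max = L^{α+β−1}/Γ(α+β). -/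
open MeasureTheory Set

/-- The supremum norm of a function over the interval `[a,b]`. -/
noncomputable def supNorm (a b : ℝ) (x : ℝ → ℝ) : ℝ :=
  ⨆ t : Set.Icc a b, |x ↑t|

theorem mild_solution_norm_estimate
    (a b α β κ : ℝ) (hab : a < b)
    (hα0 : 0 < α) (hα1 : α ≤ 1) (hβ0 : 0 < β) (hβ1 : β ≤ 1) (hαβ : 1 < α + β)
    (ψ ψd : ℝ → ℝ)
    (hψ : ∀ t ∈ Set.Icc a b, HasDerivAt ψ (ψd t) t)
    (hψd_cont : ContinuousOn ψd (Set.Icc a b))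
    (hψd_pos : ∀ t ∈ Set.Icc a b, 0 < ψd t)
    (q φ : ℝ → ℝ) (f : ℝ → ℝ → ℝ) (𝒢 : (ℝ → ℝ) → ℝ)
    (hq_meas : AEStronglyMeasurable q (volume.restrict (Set.Ioo a b)))
    (hq_nonneg : ∀ t ∈ Set.Ioo a b, 0 ≤ q t)
    (hqL1 : IntervalIntegrable (fun t => ψd t * q t) volume a b)
    (hφ_pos : ∀ s, 0 < φ s) (hφ_mono : Monotone φ)
    (hφ_concave : ConcaveOn ℝ Set.univ φ)
    (hf : ∀ t ∈ Set.Ioo a b, ∀ u : ℝ, |f t u| ≤ q t * φ |u|)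
    (hκ0 : 0 < κ) (hκ1 : κ < 1)
    (h𝒢 : ∀ x : ℝ → ℝ, ContinuousOn x (Set.Icc a b) → |𝒢 x| ≤ κ * supNorm a b x)
    (x : ℝ → ℝ) (hx_cont : ContinuousOn x (Set.Icc a b))
    (hfx_meas : AEStronglyMeasurable (fun t => f t (x t)) (volume.restrict (Set.Ioo a b)))
    (hmild : ∀ t ∈ Set.Icc a b,
      x t = ((ψ t - ψ a) / (ψ b - ψ a)) ^ β * 𝒢 x +
        ∫ τ in a..b, G a b α β ψ τ t * ψd τ * f τ (x τ)) :
    (1 - κ) * supNorm a b x ≤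
      (ψ b - ψ a) ^ (α + β - 1) / Real.Gamma (α + β) *
        (∫ τ in a..b, ψd τ * q τ) * φ (supNorm a b x) := by
  have hmono : StrictMonoOn ψ (Icc a b) := by
    apply strictMonoOn_of_deriv_pos (convex_Icc a b)
    · exact fun t ht => (hψ t ht).continuousAt.continuousWithinAt
    · intro t ht
      have ht' := interior_subset ht
      rw [(hψ t ht').deriv]
      exact hψd_pos t ht'
  have ha : a ∈ Icc a b := left_mem_Icc.2 hab.le
  have hb : b ∈ Icc a b := right_mem_Icc.2 hab.le
  have hL : 0 < ψ b - ψ a := sub_pos.2 (hmono ha hb hab)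
  have hΓ : 0 < Real.Gamma (α + β) := Real.Gamma_pos_of_pos (by linarith)
  set M := (ψ b - ψ a) ^ (α + β - 1) / Real.Gamma (α + β) with hM
  have hM0 : 0 ≤ M := by positivity
  have hratio : ∀ t ∈ Icc a b, 0 ≤ ((ψ t - ψ a) / (ψ b - ψ a)) ^ β ∧
      ((ψ t - ψ a) / (ψ b - ψ a)) ^ β ≤ 1 := by
    intro t ht
    have h1 : 0 ≤ ψ t - ψ a := sub_nonneg.2 (hmono.monotoneOn ha ht ht.1)
    have h2 : ψ t ≤ ψ b := hmono.monotoneOn ht hb ht.2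
    have h3 : 0 ≤ (ψ t - ψ a) / (ψ b - ψ a) := by positivity
    refine ⟨Real.rpow_nonneg h3 _, Real.rpow_le_one h3 ?_ hβ0.le⟩
    rw [div_le_one hL]; linarith
  have hG : ∀ t ∈ Icc a b, ∀ τ ∈ Icc a b, |G a b α β ψ τ t| ≤ M := by
    intro t ht τ hτ
    have h1 : 0 ≤ ψ t - ψ a := sub_nonneg.2 (hmono.monotoneOn ha ht ht.1)
    have h2 : ψ t ≤ ψ b := hmono.monotoneOn ht hb ht.2
    have h3 : ψ a ≤ ψ τ := hmono.monotoneOn ha hτ hτ.1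
    have h4 : ψ τ ≤ ψ b := hmono.monotoneOn hτ hb hτ.2
    have hA : (ψ t - ψ a) ^ β * (ψ b - ψ τ) ^ (α + β - 1) /
        (Real.Gamma (α + β) * (ψ b - ψ a) ^ β) =
        ((ψ t - ψ a) / (ψ b - ψ a)) ^ β * ((ψ b - ψ τ) ^ (α + β - 1) / Real.Gamma (α + β)) := by
      rw [Real.div_rpow h1 hL.le]
      have : (ψ b - ψ a) ^ β ≠ 0 := (Real.rpow_pos_of_pos hL _).ne'
      field_simp
    have key : ∀ s, 0 ≤ s → s ≤ ψ b - ψ a →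
        0 ≤ s ^ (α + β - 1) / Real.Gamma (α + β) ∧
        s ^ (α + β - 1) / Real.Gamma (α + β) ≤ M := by
      intro s hs hs'
      refine ⟨by positivity, ?_⟩
      rw [hM]
      exact div_le_div_of_nonneg_right
        (Real.rpow_le_rpow hs hs' (by linarith)) hΓ.le
    obtain ⟨k1, k2⟩ := key (ψ b - ψ τ) (by linarith) (by linarith)
    obtain ⟨r1, r2⟩ := hratio t ht
    have e1 := mul_nonneg r1 k1
    have e2 := (mul_le_of_le_one_left k1 r2).trans k2
    unfold G
    rw [hA]
    split_ifs with h
    · have h5 : ψ τ ≤ ψ t := hmono.monotoneOn hτ ht h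
      obtain ⟨k3, k4⟩ := key (ψ t - ψ τ) (by linarith) (by linarith)
      rw [abs_le]; constructor <;> linarith
    · rw [abs_le]; constructor <;> linarith
  have hbdd : BddAbove (range fun t : Icc a b => |x t|) := by
    obtain ⟨C, hC⟩ := isCompact_Icc.exists_bound_of_continuousOn hx_cont
    refine ⟨C, ?_⟩
    rintro _ ⟨t, rfl⟩
    exact hC t t.2
  have hN : ∀ t ∈ Icc a b, |x t| ≤ supNorm a b x := fun t ht => le_ciSup hbdd ⟨t, ht⟩
  haveI : Nonempty (Icc a b) := ⟨⟨a, ha⟩⟩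
  have main : supNorm a b x ≤ κ * supNorm a b x +
      M * (∫ τ in a..b, ψd τ * q τ) * φ (supNorm a b x) := by
    conv_lhs => unfold supNorm
    refine ciSup_le fun t => ?_
    obtain ⟨t, ht⟩ := t
    show |x t| ≤ _
    rw [hmild t ht]
    refine (abs_add_le _ _).trans (add_le_add ?_ ?_)
    · obtain ⟨r1, r2⟩ := hratio t ht
      rw [abs_mul, abs_of_nonneg r1]
      exact (mul_le_of_le_one_left (abs_nonneg _) r2).trans (h𝒢 x hx_cont)
    · have hb1 : ‖∫ τ in a..b, G a b α β ψ τ t * ψd τ * f τ (x τ)‖ ≤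
          ∫ τ in a..b, M * φ (supNorm a b x) * (ψd τ * q τ) := by
        apply intervalIntegral.norm_integral_le_of_norm_le hab.le
        · have hne : ∀ᵐ τ : ℝ, τ ≠ b := by simp [ae_iff]
          filter_upwards [hne] with τ hτb hτ
          have hτo : τ ∈ Ioo a b := ⟨hτ.1, lt_of_le_of_ne hτ.2 hτb⟩
          have hτc := Ioo_subset_Icc_self hτo
          have p1 := hψd_pos τ hτc
          have p2 : |f τ (x τ)| ≤ q τ * φ (supNorm a b x) :=
            (hf τ hτo _).trans
              (mul_le_mul_of_nonneg_left (hφ_mono (hN τ hτc)) (hq_nonneg τ hτo))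
          rw [Real.norm_eq_abs, abs_mul, abs_mul, abs_of_pos p1]
          calc |G a b α β ψ τ t| * ψd τ * |f τ (x τ)|
              ≤ M * ψd τ * (q τ * φ (supNorm a b x)) := by
                gcongr
                exact hG t ht τ hτc
            _ = _ := by ring
        · exact hqL1.const_mul _
      rw [intervalIntegral.integral_const_mul, Real.norm_eq_abs] at hb1
      linarith
  linarith
end

section
/- (Lyapunov-type inequality) Suppose q: (a,b) → ℝ is measurable and nonnegative with t ↦ ψ'(t)q(t) in L¹(a,b), φ: ℝ → (0,∞) is nondecreasing and concave, |f(t,x)| ≤ q(t)·φ(|x|) for all t ∈ (a,b) and x ∈ ℝ, and |𝒢(x)| ≤ κ·‖x‖ for all x ∈ C([a,b],ℝ) with some κ ∈ (0,1). If the problem has a nontrivial mild solution x (i.e., x is not identically zero) such that t ↦ f(t,x(t)) is measurable on (a,b), then ∫_a^b ψ'(τ)q(τ) dτ ≥ ((1−κ)/G_max) · ‖x‖/φ(‖x‖), where G_max = L^{α+β−1}/Γ(α+β). -/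
open MeasureTheory Set

theorem G_abs_le (a b α β : ℝ) (hab : a < b) (hβ0 : 0 < β) (hαβ : 1 < α + β)
    (ψ : ℝ → ℝ) (hm : StrictMonoOn ψ (Set.Icc a b)) (τ t : ℝ)
    (hτ : τ ∈ Set.Icc a b) (ht : t ∈ Set.Icc a b) :
    |G a b α β ψ τ t| ≤ (ψ b - ψ a) ^ (α + β - 1) / Real.Gamma (α + β) := by
  have ha : a ∈ Set.Icc a b := ⟨le_refl _, hab.le⟩
  have hb : b ∈ Set.Icc a b := ⟨hab.le, le_refl _⟩
  have hL : 0 < ψ b - ψ a := sub_pos.2 (hm ha hb hab)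
  have hΓ : 0 < Real.Gamma (α + β) := Real.Gamma_pos_of_pos (by linarith)
  have h1 := hm.monotoneOn ha ht ht.1
  have h2 := hm.monotoneOn ht hb ht.2
  have h3 := hm.monotoneOn ha hτ hτ.1
  have h4 := hm.monotoneOn hτ hb hτ.2
  have hγ : 0 ≤ α + β - 1 := by linarith
  have p1 : 0 ≤ (ψ t - ψ a) ^ β := Real.rpow_nonneg (by linarith) _
  have p2 : 0 ≤ (ψ b - ψ τ) ^ (α + β - 1) := Real.rpow_nonneg (by linarith) _
  have p3 : 0 < (ψ b - ψ a) ^ β := Real.rpow_pos_of_pos hL _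
  have u1 : (ψ t - ψ a) ^ β ≤ (ψ b - ψ a) ^ β :=
    Real.rpow_le_rpow (by linarith) (by linarith) hβ0.le
  have u2 : (ψ b - ψ τ) ^ (α + β - 1) ≤ (ψ b - ψ a) ^ (α + β - 1) :=
    Real.rpow_le_rpow (by linarith) (by linarith) hγ
  have A0 : 0 ≤ (ψ t - ψ a) ^ β * (ψ b - ψ τ) ^ (α + β - 1) /
      (Real.Gamma (α + β) * (ψ b - ψ a) ^ β) := by positivity
  have A1 : (ψ t - ψ a) ^ β * (ψ b - ψ τ) ^ (α + β - 1) /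
      (Real.Gamma (α + β) * (ψ b - ψ a) ^ β) ≤
      (ψ b - ψ a) ^ (α + β - 1) / Real.Gamma (α + β) := by
    rw [div_le_div_iff₀ (by positivity) hΓ]
    have := mul_le_mul u1 u2 p2 p3.le
    calc _ ≤ ((ψ b - ψ a) ^ β * (ψ b - ψ a) ^ (α + β - 1)) * Real.Gamma (α + β) :=
          mul_le_mul_of_nonneg_right this hΓ.le
      _ = _ := by ring
  unfold G
  split_ifs with h
  · have h5 := hm.monotoneOn hτ ht h
    have B0 : 0 ≤ (ψ t - ψ τ) ^ (α + β - 1) / Real.Gamma (α + β) :=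
      div_nonneg (Real.rpow_nonneg (by linarith) _) hΓ.le
    have B1 : (ψ t - ψ τ) ^ (α + β - 1) / Real.Gamma (α + β) ≤
        (ψ b - ψ a) ^ (α + β - 1) / Real.Gamma (α + β) :=
      div_le_div_of_nonneg_right
        (Real.rpow_le_rpow (by linarith) (by linarith) hγ) hΓ.le
    rw [abs_le]
    constructor <;> linarith
  · rw [abs_of_nonneg A0]
    exact A1

theorem lyapunov_type_inequality
    (a b α β κ : ℝ) (hab : a < b)
    (hα0 : 0 < α) (hα1 : α ≤ 1) (hβ0 : 0 < β) (hβ1 : β ≤ 1) (hαβ : 1 < α + β)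
    (ψ ψd : ℝ → ℝ)
    (hψ : ∀ t ∈ Set.Icc a b, HasDerivAt ψ (ψd t) t)
    (hψd_cont : ContinuousOn ψd (Set.Icc a b))
    (hψd_pos : ∀ t ∈ Set.Icc a b, 0 < ψd t)
    (q φ : ℝ → ℝ) (f : ℝ → ℝ → ℝ) (𝒢 : (ℝ → ℝ) → ℝ)
    (hq_meas : AEStronglyMeasurable q (volume.restrict (Set.Ioo a b)))
    (hq_nonneg : ∀ t ∈ Set.Ioo a b, 0 ≤ q t)
    (hqL1 : IntervalIntegrable (fun t => ψd t * q t) volume a b)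
    (hφ_pos : ∀ s, 0 < φ s) (hφ_mono : Monotone φ)
    (hφ_concave : ConcaveOn ℝ Set.univ φ)
    (hf : ∀ t ∈ Set.Ioo a b, ∀ u : ℝ, |f t u| ≤ q t * φ |u|)
    (hκ0 : 0 < κ) (hκ1 : κ < 1)
    (h𝒢 : ∀ x : ℝ → ℝ, ContinuousOn x (Set.Icc a b) → |𝒢 x| ≤ κ * supNorm a b x)
    (x : ℝ → ℝ) (hx_cont : ContinuousOn x (Set.Icc a b))
    (hfx_meas : AEStronglyMeasurable (fun t => f t (x t)) (volume.restrict (Set.Ioo a b)))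
    (hmild : ∀ t ∈ Set.Icc a b,
      x t = ((ψ t - ψ a) / (ψ b - ψ a)) ^ β * 𝒢 x +
        ∫ τ in a..b, G a b α β ψ τ t * ψd τ * f τ (x τ))
    (hx_nontrivial : ∃ t ∈ Set.Icc a b, x t ≠ 0) :
    ∫ τ in a..b, ψd τ * q τ ≥
      (1 - κ) / ((ψ b - ψ a) ^ (α + β - 1) / Real.Gamma (α + β)) *
        (supNorm a b x / φ (supNorm a b x)) := by
  have ha : a ∈ Set.Icc a b := ⟨le_refl _, hab.le⟩
  have hb : b ∈ Set.Icc a b := ⟨hab.le, le_refl _⟩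
  have hm : StrictMonoOn ψ (Set.Icc a b) := by
    apply strictMonoOn_of_deriv_pos (convex_Icc a b)
      (fun t ht => (hψ t ht).continuousAt.continuousWithinAt)
    intro t ht
    have ht' := interior_subset ht
    rw [(hψ t ht').deriv]
    exact hψd_pos t ht'
  have hL : 0 < ψ b - ψ a := sub_pos.2 (hm ha hb hab)
  have hΓ : 0 < Real.Gamma (α + β) := Real.Gamma_pos_of_pos (by linarith)
  have hM : 0 < (ψ b - ψ a) ^ (α + β - 1) / Real.Gamma (α + β) :=
    div_pos (Real.rpow_pos_of_pos hL _) hΓ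
  have hG := G_abs_le a b α β hab hβ0 hαβ ψ hm
  set M := (ψ b - ψ a) ^ (α + β - 1) / Real.Gamma (α + β) with hMdef
  have hbdd : BddAbove (Set.range fun t : Set.Icc a b => |x ↑t|) := by
    have h := isCompact_Icc.bddAbove_image (f := fun t => |x t|) hx_cont.abs
    rwa [Set.image_eq_range] at h
  have hle : ∀ t ∈ Set.Icc a b, |x t| ≤ supNorm a b x := fun t ht =>
    le_ciSup hbdd (⟨t, ht⟩ : Set.Icc a b)
  have hGx := h𝒢 x hx_cont
  have key : supNorm a b x ≤ κ * supNorm a b x +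
      M * φ (supNorm a b x) * ∫ τ in a..b, ψd τ * q τ := by
    haveI : Nonempty (Set.Icc a b) := ⟨⟨a, ha⟩⟩
    refine ciSup_le ?_
    rintro ⟨t, ht⟩
    change |x t| ≤ _
    have hI : ‖∫ τ in a..b, G a b α β ψ τ t * ψd τ * f τ (x τ)‖ ≤
        ∫ τ in a..b, M * φ (supNorm a b x) * (ψd τ * q τ) := by
      apply intervalIntegral.norm_integral_le_of_norm_le hab.le _ (hqL1.const_mul _)
      have hne : ∀ᵐ τ : ℝ ∂volume, τ ≠ b := by
        simp [ae_iff]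
      filter_upwards [hne] with τ hτb hτ
      have hτo : τ ∈ Set.Ioo a b := ⟨hτ.1, lt_of_le_of_ne hτ.2 hτb⟩
      have hτc := Set.Ioo_subset_Icc_self hτo
      have hp := hψd_pos τ hτc
      have hq := hq_nonneg τ hτo
      have e1 : |f τ (x τ)| ≤ q τ * φ (supNorm a b x) :=
        (hf τ hτo _).trans (mul_le_mul_of_nonneg_left (hφ_mono (hle τ hτc)) hq)
      rw [Real.norm_eq_abs, abs_mul, abs_mul, abs_of_pos hp]
      calc _ ≤ M * ψd τ * (q τ * φ (supNorm a b x)) :=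
            mul_le_mul (mul_le_mul_of_nonneg_right (hG τ t hτc ht) hp.le) e1
              (abs_nonneg _) (by positivity)
        _ = _ := by ring
    rw [intervalIntegral.integral_const_mul, Real.norm_eq_abs] at hI
    have h1 := hm.monotoneOn ha ht ht.1
    have h2 := hm.monotoneOn ht hb ht.2
    have c0 : 0 ≤ (ψ t - ψ a) / (ψ b - ψ a) := div_nonneg (by linarith) hL.le
    have c1 : (ψ t - ψ a) / (ψ b - ψ a) ≤ 1 := (div_le_one hL).2 (by linarith)
    have d0 := Real.rpow_nonneg c0 β
    have d1 := Real.rpow_le_one c0 c1 hβ0.le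
    have e : |((ψ t - ψ a) / (ψ b - ψ a)) ^ β * 𝒢 x| ≤ κ * supNorm a b x := by
      rw [abs_mul, abs_of_nonneg d0]
      exact (mul_le_of_le_one_left (abs_nonneg _) d1).trans hGx
    rw [hmild t ht]
    exact (abs_add_le _ _).trans (add_le_add e hI)
  have hφN := hφ_pos (supNorm a b x)
  rw [ge_iff_le, div_mul_div_comm, div_le_iff₀ (by positivity)]
  linarith
end

section
/- (Existence) Suppose: (i) 𝒢: C([a,b],ℝ) → ℝ is continuous and |𝒢(x)| ≤ κ·‖x‖ for all x ∈ C([a,b],ℝ) with κ ∈ (0,1); (ii) f: (a,b)×ℝ → ℝ satisfies f(·,u) measurable for each u ∈ ℝ, |f(t,x)| ≤ κ₁(t)·Ψ(|x|) and |f(t,x)−f(t,y)| ≤ κ₂(t)·|Φ(x,y)| for all t ∈ (a,b) and x, y ∈ ℝ, where κ₁, κ₂: (a,b) → [0,∞) are measurable with ψ'·κ₁ and ψ'·κ₂ in L¹(a,b), Ψ: [0,∞) → [0,∞) is nondecreasing, and Φ: ℝ×ℝ → ℝ is continuous with Φ(x,y) → 0 as |x−y| → 0 (uniformly: for every ε >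 0 there is δ > 0 such that |x−y| < δ implies |Φ(x,y)| < ε); (iii) there exists M > 0 such that (1−κ)·M > Ψ(M)·G_max·∫_a^b ψ'(τ)κ₁(τ) dτ, where G_max = L^{α+β−1}/Γ(α+β). Then the problem has at least one mild solution x with ‖x‖ ≤ M. -/
open MeasureTheory Set

open Filter Topology in
lemma cara_meas {μ : Measure ℝ} {F : ℝ → ℝ → ℝ}
    (hm : ∀ u, AEStronglyMeasurable (fun τ => F τ u) μ)
    (hc : ∀ᵐ τ ∂μ, Continuous (F τ)) {s : ℝ → ℝ} (hs : Measurable s) :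
    AEStronglyMeasurable (fun τ => F τ (s τ)) μ := by
  have hs' := hs.stronglyMeasurable
  refine aestronglyMeasurable_of_tendsto_ae atTop (f := fun n τ => F τ (hs'.approx n τ)) ?_ ?_
  · intro n
    set φ := hs'.approx n
    have : (fun τ => F τ (φ τ)) =
        fun τ => ∑ u ∈ φ.range, (φ ⁻¹' {u}).indicator (fun τ => F τ u) τ := by
      funext τ
      rw [Finset.sum_eq_single (φ τ)]
      · simp
      · intro u _ hu
        apply indicator_of_notMem
        simpa using fun h => hu h.symm
      · intro h
        exact absurd (φ.mem_range_self τ) h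
    rw [this]
    refine Finset.aestronglyMeasurable_fun_sum _ fun u _ => ?_
    exact (hm u).indicator (φ.measurableSet_fiber u)
  · filter_upwards [hc] with τ hτ
    exact (hτ.tendsto _).comp (hs'.tendsto_approx τ)

section abs
open Filter Topology

variable {μ : Measure ℝ} {F : ℝ → ℝ → ℝ} {H : ℝ → ℝ}

lemma F_int (hm : ∀ u, AEStronglyMeasurable (fun τ => F τ u) μ)
    (hc : ∀ᵐ τ ∂μ, Continuous (F τ)) (hb : ∀ᵐ τ ∂μ, ∀ u, |F τ u| ≤ H τ)
    (hH : Integrable H μ) {s : ℝ → ℝ} (hs : Measurable s) :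
    Integrable (fun τ => F τ (s τ)) μ := by
  refine hH.mono' (cara_meas hm hc hs) ?_
  filter_upwards [hb] with τ h using h _

lemma kF_int (hm : ∀ u, AEStronglyMeasurable (fun τ => F τ u) μ)
    (hc : ∀ᵐ τ ∂μ, Continuous (F τ)) (hb : ∀ᵐ τ ∂μ, ∀ u, |F τ u| ≤ H τ)
    (hH : Integrable H μ) {s : ℝ → ℝ} (hs : Measurable s) {q : ℝ → ℝ} {K : ℝ}
    (hq : Continuous q) (hqK : ∀ τ, |q τ| ≤ K) :
    Integrable (fun τ => q τ * F τ (s τ)) μ :=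
  (F_int hm hc hb hH hs).bdd_mul hq.aestronglyMeasurable (Eventually.of_forall hqK)

lemma F_tendsto (hm : ∀ u, AEStronglyMeasurable (fun τ => F τ u) μ)
    (hc : ∀ᵐ τ ∂μ, Continuous (F τ)) (hb : ∀ᵐ τ ∂μ, ∀ u, |F τ u| ≤ H τ)
    (hH : Integrable H μ) {s : ℝ → ℝ} (hs : Measurable s) {S : ℕ → ℝ → ℝ}
    (hS : ∀ n, Measurable (S n))
    (hlim : ∀ᵐ τ ∂μ, Tendsto (fun n => S n τ) atTop (𝓝 (s τ))) :
    Tendsto (fun n => ∫ τ, |F τ (S n τ) - F τ (s τ)| ∂μ) atTop (𝓝 0) := by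
  have : (0 : ℝ) = ∫ τ, (0:ℝ) ∂μ := by simp
  rw [this]
  refine tendsto_integral_of_dominated_convergence (fun τ => 2 * H τ) ?_ (hH.const_mul 2) ?_ ?_
  · intro n
    exact ((cara_meas hm hc (hS n)).sub (cara_meas hm hc hs)).norm
  · intro n
    filter_upwards [hb] with τ h
    rw [Real.norm_eq_abs, abs_abs]
    have h1 := abs_sub (F τ (S n τ)) (F τ (s τ))
    linarith [h (S n τ), h (s τ)]
  · filter_upwards [hc, hlim] with τ h1 h2
    have := ((h1.tendsto _).comp h2).sub_const (F τ (s τ))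
    simpa using this.abs

lemma kF_diff (hm : ∀ u, AEStronglyMeasurable (fun τ => F τ u) μ)
    (hc : ∀ᵐ τ ∂μ, Continuous (F τ)) (hb : ∀ᵐ τ ∂μ, ∀ u, |F τ u| ≤ H τ)
    (hH : Integrable H μ) {s s' : ℝ → ℝ} (hs : Measurable s) (hs' : Measurable s')
    {q : ℝ → ℝ} {K : ℝ}
    (hq : Continuous q) (hqK : ∀ τ, |q τ| ≤ K) :
    |(∫ τ, q τ * F τ (s τ) ∂μ) - ∫ τ, q τ * F τ (s' τ) ∂μ| ≤
      K * ∫ τ, |F τ (s τ) - F τ (s' τ)| ∂μ := by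
  rw [← integral_sub (kF_int hm hc hb hH hs hq hqK) (kF_int hm hc hb hH hs' hq hqK),
    ← integral_const_mul]
  refine norm_integral_le_of_norm_le (f := fun τ => q τ * F τ (s τ) - q τ * F τ (s' τ))
    (((F_int hm hc hb hH hs).sub (F_int hm hc hb hH hs')).abs.const_mul K)
    (Eventually.of_forall fun τ => ?_)
  rw [← mul_sub, Real.norm_eq_abs, abs_mul]
  exact mul_le_mul_of_nonneg_right (hqK τ) (abs_nonneg _)

lemma kF_bound (hb : ∀ᵐ τ ∂μ, ∀ u, |F τ u| ≤ H τ)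
    (hH : Integrable H μ) (s : ℝ → ℝ)
    {q : ℝ → ℝ} {K : ℝ} (hK : 0 ≤ K) (hqK : ∀ᵐ τ ∂μ, |q τ| ≤ K) :
    |∫ τ, q τ * F τ (s τ) ∂μ| ≤ K * ∫ τ, H τ ∂μ := by
  rw [← integral_const_mul]
  refine norm_integral_le_of_norm_le (f := fun τ => q τ * F τ (s τ)) (hH.const_mul K) ?_
  filter_upwards [hb, hqK] with τ h h'
  rw [Real.norm_eq_abs, abs_mul]
  exact mul_le_mul h' (h _) (abs_nonneg _) hK

variable {k : ℝ → ℝ → ℝ} {K : ℝ}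

/-- modulus of continuity -/
lemma k_mod (hH : Integrable H μ) (hk : Continuous fun z : ℝ × ℝ => k z.1 z.2)
    (hkK : ∀ t τ, |k t τ| ≤ K) (t₀ : ℝ) :
    Tendsto (fun t => ∫ τ, |k t τ - k t₀ τ| * H τ ∂μ) (𝓝 t₀) (𝓝 0) := by
  have : (0 : ℝ) = ∫ τ, (0:ℝ) ∂μ := by simp
  rw [this]
  have hk1 : ∀ t, Continuous (k t) := fun t => hk.comp (by fun_prop : Continuous fun τ => (t, τ))
  have hk2 : ∀ τ, Continuous fun t => k t τ :=
    fun τ => hk.comp (by fun_prop : Continuous fun t => (t, τ))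
  refine tendsto_integral_filter_of_dominated_convergence (fun τ => 2 * K * |H τ|) ?_ ?_
    (hH.abs.const_mul _) ?_
  · exact Eventually.of_forall fun t =>
      (((hk1 t).sub (hk1 t₀)).abs.aestronglyMeasurable).mul hH.1
  · refine Eventually.of_forall fun t => Eventually.of_forall fun τ => ?_
    rw [Real.norm_eq_abs, abs_mul, abs_abs]
    refine mul_le_mul_of_nonneg_right ?_ (abs_nonneg _)
    have h1 := abs_sub (k t τ) (k t₀ τ)
    linarith [hkK t τ, hkK t₀ τ]
  · refine Eventually.of_forall fun τ => ?_
    have h := (((hk2 τ).tendsto t₀).sub_const (k t₀ τ)).abs.mul_const (H τ)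
    simpa using h

lemma k_mod_le (hm : ∀ u, AEStronglyMeasurable (fun τ => F τ u) μ)
    (hc : ∀ᵐ τ ∂μ, Continuous (F τ)) (hb : ∀ᵐ τ ∂μ, ∀ u, |F τ u| ≤ H τ)
    (hH : Integrable H μ) {s : ℝ → ℝ} (hs : Measurable s)
    (hk : Continuous fun z : ℝ × ℝ => k z.1 z.2)
    (hkK : ∀ t τ, |k t τ| ≤ K) (t₀ t : ℝ) :
    |(∫ τ, k t τ * F τ (s τ) ∂μ) - ∫ τ, k t₀ τ * F τ (s τ) ∂μ| ≤
      ∫ τ, |k t τ - k t₀ τ| * H τ ∂μ := by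
  have hk1 : ∀ t, Continuous (k t) := fun t => hk.comp (by fun_prop : Continuous fun τ => (t, τ))
  rw [← integral_sub (kF_int hm hc hb hH hs (hk1 t) (hkK t))
    (kF_int hm hc hb hH hs (hk1 t₀) (hkK t₀))]
  refine norm_integral_le_of_norm_le
    (f := fun τ => k t τ * F τ (s τ) - k t₀ τ * F τ (s τ)) ?_ ?_
  · refine hH.bdd_mul (c := 2 * K) ((hk1 t).sub (hk1 t₀)).abs.aestronglyMeasurable
      (Eventually.of_forall fun τ => ?_)
    rw [Real.norm_eq_abs, abs_abs]
    have h1 := abs_sub (k t τ) (k t₀ τ)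
    linarith [hkK t τ, hkK t₀ τ]
  · filter_upwards [hb] with τ h
    rw [← sub_mul, Real.norm_eq_abs, abs_mul]
    exact mul_le_mul_of_nonneg_left (h _) (abs_nonneg _)

lemma kF_cont (hm : ∀ u, AEStronglyMeasurable (fun τ => F τ u) μ)
    (hc : ∀ᵐ τ ∂μ, Continuous (F τ)) (hb : ∀ᵐ τ ∂μ, ∀ u, |F τ u| ≤ H τ)
    (hH : Integrable H μ) {s : ℝ → ℝ} (hs : Measurable s)
    (hk : Continuous fun z : ℝ × ℝ => k z.1 z.2)
    (hkK : ∀ t τ, |k t τ| ≤ K) :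
    Continuous fun t => ∫ τ, k t τ * F τ (s τ) ∂μ := by
  rw [continuous_iff_continuousAt]
  intro t₀
  rw [ContinuousAt, tendsto_iff_norm_sub_tendsto_zero]
  exact squeeze_zero (fun _ => norm_nonneg _)
    (fun t => k_mod_le hm hc hb hH hs hk hkK t₀ t) (k_mod hH hk hkK t₀)

/-- Delayed equation. -/
lemma delayed {a b : ℝ} (hab : a < b) (hμ : ∀ᵐ τ ∂μ, τ ∈ Ioo a b)
    (hm : ∀ u, AEStronglyMeasurable (fun τ => F τ u) μ)
    (hc : ∀ᵐ τ ∂μ, Continuous (F τ)) (hb : ∀ᵐ τ ∂μ, ∀ u, |F τ u| ≤ H τ)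
    (hH : Integrable H μ)
    (hk : Continuous fun z : ℝ × ℝ => k z.1 z.2)
    (hkK : ∀ t τ, |k t τ| ≤ K) (hk0 : ∀ t τ, t ≤ τ → k t τ = 0)
    (hkp : ∀ t τ, k (projIcc a b hab.le t) τ = k t τ)
    {p : ℝ → ℝ} (hp : Continuous p) (hp0 : ∀ t ≤ a, p t = 0)
    (hpp : ∀ t, p (projIcc a b hab.le t) = p t) {δ : ℝ} (hδ : 0 < δ) :
    ∃ X : ℝ → ℝ → ℝ, (∀ c, Continuous (X c)) ∧
      (∀ c t, X c t = c * p t - ∫ τ, k t τ * F τ (X c (τ - δ)) ∂μ) ∧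
      (∀ t, Continuous fun c => X c t) := by
  let x : ℕ → ℝ → ℝ → ℝ := fun m => Nat.rec (fun _ _ => 0)
    (fun _ y c t => c * p t - ∫ τ, k t τ * F τ (y c (τ - δ)) ∂μ) m
  have hx0 : ∀ c t, x 0 c t = 0 := fun _ _ => rfl
  have hxs : ∀ m c t, x (m+1) c t = c * p t - ∫ τ, k t τ * F τ (x m c (τ - δ)) ∂μ :=
    fun _ _ _ => rfl
  clear_value x
  have hk1 : ∀ t, Continuous (k t) := fun t => hk.comp (by fun_prop : Continuous fun τ => (t, τ))
  have hxc : ∀ m c, Continuous (x m c) := by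
    intro m
    induction m with
    | zero => intro c; simp only [show x 0 c = fun _ => 0 from funext (hx0 c)]; fun_prop
    | succ m ih =>
      intro c
      rw [show x (m+1) c = _ from funext (hxs m c)]
      exact (hp.const_mul c).sub (kF_cont hm hc hb hH
        ((ih c).comp (by fun_prop : Continuous fun τ => τ - δ)).measurable hk hkK)
  have hmeas : ∀ m c, Measurable fun τ => x m c (τ - δ) := fun m c =>
    ((hxc m c).comp (by fun_prop : Continuous fun τ => τ - δ)).measurable
  have hxcc : ∀ m t, Continuous fun c => x m c t := by
    intro m
    induction m with
    | zero => intro t; simp only [hx0]; fun_prop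
    | succ m ih =>
      intro t
      simp only [hxs]
      refine (continuous_id.mul continuous_const).sub ?_
      rw [continuous_iff_seqContinuous]
      intro cs c hcs
      rw [tendsto_iff_norm_sub_tendsto_zero]
      refine squeeze_zero (fun _ => norm_nonneg _)
        (fun n => kF_diff hm hc hb hH (hmeas m _) (hmeas m _) (hk1 t) (hkK t)) ?_
      have := F_tendsto (S := fun n τ => x m (cs n) (τ - δ)) hm hc hb hH (hmeas m c)
        (fun n => hmeas m (cs n))
        (Eventually.of_forall fun τ => ((ih (τ - δ)).tendsto c).comp hcs)
      simpa using this.const_mul K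
  have hxp : ∀ m c t, x m c (projIcc a b hab.le t) = x m c t := by
    intro m c t
    cases m with
    | zero => simp [hx0]
    | succ m => simp only [hxs, hkp, hpp]
  have hstab : ∀ (m : ℕ) c t, t ≤ a + (m : ℝ) * δ → x (m+1) c t = x m c t := by
    intro m c
    induction m with
    | zero =>
      intro t ht
      have ht : t ≤ a := by simpa using ht
      rw [hxs, hx0, hp0 t ht, mul_zero, zero_sub, neg_eq_zero]
      rw [← integral_zero ℝ ℝ (μ := μ)]
      refine integral_congr_ae ?_
      filter_upwards [hμ] with τ hτ
      rw [hk0 t τ (ht.trans hτ.1.le), zero_mul]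
    | succ m ih =>
      intro t ht
      rw [hxs, hxs]
      congr 1
      refine integral_congr_ae (Eventually.of_forall fun τ => ?_)
      simp only
      rcases le_total t τ with h | h
      · rw [hk0 t τ h, zero_mul, zero_mul]
      · rw [ih (τ - δ)]
        push_cast at ht
        linarith
  obtain ⟨m, hmb⟩ := exists_nat_gt ((b - a) / δ)
  rw [div_lt_iff₀ hδ] at hmb
  refine ⟨x m, hxc m, fun c t => ?_, hxcc m⟩
  rw [← hxs, ← hxp m, ← hxp (m+1)]
  refine (hstab m c _ ?_).symm
  have := (projIcc a b hab.le t).2.2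
  linarith

/-- Main abstract existence. -/
theorem abs_exist {a b : ℝ} (hab : a < b) (hμ : ∀ᵐ τ ∂μ, τ ∈ Ioo a b)
    (hm : ∀ u, AEStronglyMeasurable (fun τ => F τ u) μ)
    (hc : ∀ᵐ τ ∂μ, Continuous (F τ)) (hb : ∀ᵐ τ ∂μ, ∀ u, |F τ u| ≤ H τ)
    (hH : Integrable H μ)
    (hk : Continuous fun z : ℝ × ℝ => k z.1 z.2) (hK : 0 ≤ K)
    (hkK : ∀ t τ, |k t τ| ≤ K) (hk0 : ∀ t τ, t ≤ τ → k t τ = 0)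
    (hkp : ∀ t τ, k (projIcc a b hab.le t) τ = k t τ)
    {p : ℝ → ℝ} (hp : Continuous p) (hp0 : ∀ t ≤ a, p t = 0) (hpb : p b = 1)
    (hp1 : ∀ t, |p t| ≤ 1)
    (hpp : ∀ t, p (projIcc a b hab.le t) = p t)
    (𝒢 : (ℝ → ℝ) → ℝ) {κ : ℝ} (hκ1 : κ < 1) (hκ0 : 0 < κ)
    (hG1 : ∀ x, Continuous x → ∀ R, (∀ t ∈ Icc a b, |x t| ≤ R) → |𝒢 x| ≤ κ * R)
    (hG2 : ∀ (xs : ℕ → ℝ → ℝ) x, (∀ n, Continuous (xs n)) → Continuous x →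
      TendstoUniformlyOn xs x atTop (Icc a b) → Tendsto (fun n => 𝒢 (xs n)) atTop (𝓝 (𝒢 x))) :
    ∃ x : ℝ → ℝ, Continuous x ∧ ∀ t ∈ Icc a b, x t =
      (𝒢 x + ∫ τ, k b τ * F τ (x τ) ∂μ) * p t - ∫ τ, k t τ * F τ (x τ) ∂μ := by
  set A := K * ∫ τ, H τ ∂μ with hA
  have hk1 : ∀ t, Continuous (k t) := fun t => hk.comp (by fun_prop : Continuous fun τ => (t, τ))
  have hkb : ∀ (s : ℝ → ℝ) t, |∫ τ, k t τ * F τ (s τ) ∂μ| ≤ A := fun s t =>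
    kF_bound hb hH s hK (Eventually.of_forall (hkK t))
  set R := (1 + κ) * A / (1 - κ) with hR
  have hA0 : 0 ≤ A := (abs_nonneg _).trans (hkb (fun _ => 0) 0)
  have hR0 : 0 ≤ R := div_nonneg (by positivity) (by linarith)
  have hRA : R - A - κ * (R + A) = 0 := by
    have : (1 - κ) ≠ 0 := by linarith
    rw [hR]; field_simp; ring
  -- approximate solutions
  have happ : ∀ δ > 0, ∃ c ∈ Icc (-R) R, ∃ x : ℝ → ℝ, Continuous x ∧
      (∀ t, x t = c * p t - ∫ τ, k t τ * F τ (x (τ - δ)) ∂μ) ∧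
      c = 𝒢 x + ∫ τ, k b τ * F τ (x (τ - δ)) ∂μ := by
    intro δ hδ
    obtain ⟨X, hX1, hX2, hX3⟩ := delayed hab hμ hm hc hb hH hk hkK hk0 hkp hp hp0 hpp hδ
    have hmeas : ∀ c, Measurable fun τ => X c (τ - δ) := fun c =>
      ((hX1 c).comp (by fun_prop : Continuous fun τ => τ - δ)).measurable
    have hFt : ∀ (cs : ℕ → ℝ) c, Tendsto cs atTop (𝓝 c) → Tendsto (fun n =>
        K * ∫ τ, |F τ (X (cs n) (τ - δ)) - F τ (X c (τ - δ))| ∂μ) atTop (𝓝 0) := by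
      intro cs c hcs
      have := F_tendsto (S := fun n τ => X (cs n) (τ - δ)) hm hc hb hH (hmeas c)
        (fun n => hmeas (cs n))
        (Eventually.of_forall fun τ => ((hX3 (τ - δ)).tendsto c).comp hcs)
      simpa using this.const_mul K
    have hGc : Continuous fun c => 𝒢 (X c) := by
      rw [continuous_iff_seqContinuous]
      intro cs c hcs
      refine hG2 (fun n => X (cs n)) (X c) (fun n => hX1 _) (hX1 c) ?_
      rw [Metric.tendstoUniformlyOn_iff]
      intro ε hε
      have h1 := (hcs.sub_const c).abs.add (hFt cs c hcs)
      simp only [sub_self, abs_zero, add_zero] at h1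
      filter_upwards [h1.eventually_lt_const hε] with n hn t _
      refine lt_of_le_of_lt ?_ hn
      rw [dist_comm, Real.dist_eq, hX2 (cs n) t, hX2 c t]
      have h2 := kF_diff hm hc hb hH (hmeas (cs n)) (hmeas c) (hk1 t) (hkK t)
      have h3 : |(cs n - c) * p t| ≤ |cs n - c| := by
        rw [abs_mul]; exact mul_le_of_le_one_right (abs_nonneg _) (hp1 t)
      have h4 := abs_sub ((cs n - c) * p t) ((∫ τ, k t τ * F τ (X (cs n) (τ - δ)) ∂μ) -
        ∫ τ, k t τ * F τ (X c (τ - δ)) ∂μ)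
      refine le_trans (le_of_eq ?_) (h4.trans (add_le_add h3 h2))
      congr 1; ring
    have hIc : Continuous fun c => ∫ τ, k b τ * F τ (X c (τ - δ)) ∂μ := by
      have : (fun c => ∫ τ, k b τ * F τ (X c (τ - δ)) ∂μ) = fun c => c * p b - X c b := by
        funext c; rw [hX2 c b]; ring
      rw [this]
      exact (continuous_id.mul continuous_const).sub (hX3 b)
    have hGb : ∀ c, |𝒢 (X c)| ≤ κ * (|c| + A) := by
      intro c
      refine hG1 _ (hX1 c) _ fun t _ => ?_
      rw [hX2]
      refine (abs_sub _ _).trans (add_le_add ?_ (hkb _ t))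
      rw [abs_mul]; exact mul_le_of_le_one_right (abs_nonneg _) (hp1 t)
    have hcont : Continuous fun c => c - (𝒢 (X c) + ∫ τ, k b τ * F τ (X c (τ - δ)) ∂μ) :=
      continuous_id.sub (hGc.add hIc)
    have h0 : (0:ℝ) ∈ Icc (-R - (𝒢 (X (-R)) + ∫ τ, k b τ * F τ (X (-R) (τ - δ)) ∂μ))
        (R - (𝒢 (X R) + ∫ τ, k b τ * F τ (X R (τ - δ)) ∂μ)) := by
      have h1 := abs_le.1 (hGb R)
      have h2 := abs_le.1 (hGb (-R))
      have h3 := abs_le.1 (hkb (fun τ => X R (τ - δ)) b)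
      have h4 := abs_le.1 (hkb (fun τ => X (-R) (τ - δ)) b)
      rw [abs_of_nonneg hR0] at h1
      rw [abs_neg, abs_of_nonneg hR0] at h2
      constructor
      · linarith [h2.1, h4.1]
      · linarith [h1.2, h3.2]
    obtain ⟨c, hcR, hc0⟩ := intermediate_value_Icc (by linarith : -R ≤ R) hcont.continuousOn h0
    exact ⟨c, hcR, X c, hX1 c, hX2 c, by simp only at hc0; linarith⟩
  choose! cc hcc xx hxx hxeq hceq using happ
  let d : ℕ → ℝ := fun n => 1 / ((n:ℝ) + 1)
  have hd : ∀ n, 0 < d n := fun n => Nat.one_div_pos_of_nat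
  have hd0 : Tendsto d atTop (𝓝 0) := tendsto_one_div_add_atTop_nhds_zero_nat
  let Y : ℕ → BoundedContinuousFunction (Icc a b) ℝ := fun n =>
    BoundedContinuousFunction.mkOfCompact ⟨fun t => xx (d n) t, (hxx _ (hd n)).comp continuous_subtype_val⟩
  have hY : ∀ n (t : Icc a b), Y n t = xx (d n) t := fun _ _ => rfl
  have hcpt : IsCompact (closure (range Y)) := by
    refine BoundedContinuousFunction.arzela_ascoli (Metric.closedBall 0 (R + A))
      (isCompact_closedBall _ _) _ ?_ ?_
    · rintro _ t ⟨n, rfl⟩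
      rw [hY, mem_closedBall_zero_iff, Real.norm_eq_abs, hxeq _ (hd n)]
      refine (abs_sub _ _).trans (add_le_add ?_ (hkb _ _))
      rw [abs_mul]
      exact (mul_le_of_le_one_right (abs_nonneg _) (hp1 t)).trans (abs_le.2 (hcc _ (hd n)))
    · intro t₀
      refine Metric.equicontinuousAt_of_continuity_modulus
        (fun t : Icc a b => R * |p t - p t₀| + ∫ τ, |k t τ - k t₀ τ| * H τ ∂μ) ?_ _ ?_
      · have h1 : Tendsto (fun t : ℝ => R * |p t - p t₀| + ∫ τ, |k t τ - k t₀ τ| * H τ ∂μ)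
            (𝓝 (t₀ : ℝ)) (𝓝 (R * |p t₀ - p t₀| + 0)) :=
          (((hp.tendsto (t₀:ℝ)).sub_const _).abs.const_mul R).add (k_mod hH hk hkK t₀)
        simp only [sub_self, abs_zero, mul_zero, add_zero] at h1
        exact h1.comp (continuous_subtype_val.tendsto t₀)
      · refine Eventually.of_forall fun t => ?_
        rintro ⟨_, n, rfl⟩
        show dist (Y n t₀) (Y n t) ≤ _
        rw [dist_comm, Real.dist_eq, hY, hY, hxeq _ (hd n) t, hxeq _ (hd n) t₀]
        have h2 := k_mod_le hm hc hb hH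
          ((hxx _ (hd n)).comp (by fun_prop : Continuous fun τ => τ - d n)).measurable hk hkK t₀ t
        have h3 : |cc (d n) * (p t - p t₀)| ≤ R * |p t - p t₀| := by
          rw [abs_mul]
          exact mul_le_mul_of_nonneg_right (abs_le.2 (hcc _ (hd n))) (abs_nonneg _)
        refine le_trans (le_of_eq ?_) ((abs_sub _ _).trans (add_le_add h3 h2))
        congr 1; simp only [Function.comp]; ring
  obtain ⟨y, -, φ, hφ, hy⟩ := hcpt.tendsto_subseq (fun n => subset_closure (mem_range_self (f := Y) n))
  have hdφ : Tendsto (fun n => d (φ n)) atTop (𝓝 0) := hd0.comp hφ.tendsto_atTop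
  let x : ℝ → ℝ := fun t => y (projIcc a b hab.le t)
  have hx : Continuous x := y.continuous.comp continuous_projIcc
  have hxp : ∀ n t, xx (d n) t = Y n (projIcc a b hab.le t) := by
    intro n t
    rw [hY, hxeq _ (hd n) t, hxeq _ (hd n) (projIcc a b hab.le t)]
    simp only [hkp, hpp]
  have hunif : TendstoUniformly (fun n => xx (d (φ n))) x atTop := by
    have h1 := (BoundedContinuousFunction.tendsto_iff_tendstoUniformly.1 hy).comp
      (fun t => projIcc a b hab.le t)
    have h2 : (fun n => xx (d (φ n))) =
        fun n => ⇑((Y ∘ φ) n) ∘ fun t => projIcc a b hab.le t := by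
      funext n t
      simp only [Function.comp, hxp]
    rw [h2]
    exact h1
  have hdel : ∀ τ, Tendsto (fun n => xx (d (φ n)) (τ - d (φ n))) atTop (𝓝 (x τ)) := by
    intro τ
    refine hunif.tendsto_comp hx.continuousAt ?_
    simpa using hdφ.const_sub τ
  have hFt : Tendsto (fun n => K * ∫ τ, |F τ (xx (d (φ n)) (τ - d (φ n))) - F τ (x τ)| ∂μ)
      atTop (𝓝 0) := by
    have := F_tendsto (S := fun n τ => xx (d (φ n)) (τ - d (φ n))) hm hc hb hH hx.measurable
      (fun n => ((hxx _ (hd _)).comp (by fun_prop : Continuous fun τ => τ - d (φ n))).measurable)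
      (Eventually.of_forall hdel)
    simpa using this.const_mul K
  have hIt : ∀ t, Tendsto (fun n => ∫ τ, k t τ * F τ (xx (d (φ n)) (τ - d (φ n))) ∂μ) atTop
      (𝓝 (∫ τ, k t τ * F τ (x τ) ∂μ)) := by
    intro t
    rw [tendsto_iff_norm_sub_tendsto_zero]
    exact squeeze_zero (fun _ => norm_nonneg _)
        (fun n => kF_diff hm hc hb hH ((hxx _ (hd _)).comp
          (by fun_prop : Continuous fun τ => τ - d (φ n))).measurable
          hx.measurable (hk1 t) (hkK t)) hFt
  have hGt := hG2 (fun n => xx (d (φ n))) x (fun n => hxx _ (hd _)) hx hunif.tendstoUniformlyOn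
  refine ⟨x, hx, fun t _ => ?_⟩
  have hl : Tendsto (fun n => xx (d (φ n)) t) atTop (𝓝 (x t)) := hunif.tendsto_at t
  refine tendsto_nhds_unique hl ?_
  refine Tendsto.congr (fun n => ?_) (((hGt.add (hIt b)).mul_const (p t)).sub (hIt t))
  conv_rhs => rw [hxeq _ (hd _) t, hceq _ (hd _)]

end abs

theorem existence_of_mild_solution
    (a b α β κ M : ℝ) (hab : a < b)
    (hα0 : 0 < α) (hα1 : α ≤ 1) (hβ0 : 0 < β) (hβ1 : β ≤ 1) (hαβ : 1 < α + β)
    (ψ ψd : ℝ → ℝ)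
    (hψ : ∀ t ∈ Set.Icc a b, HasDerivAt ψ (ψd t) t)
    (hψd_cont : ContinuousOn ψd (Set.Icc a b))
    (hψd_pos : ∀ t ∈ Set.Icc a b, 0 < ψd t)
    (f : ℝ → ℝ → ℝ) (𝒢 : (ℝ → ℝ) → ℝ)
    (κ₁ κ₂ : ℝ → ℝ) (Ψ : ℝ → ℝ) (Φ : ℝ → ℝ → ℝ)
    -- (i) 𝒢 is continuous and bounded by κ·‖·‖ with κ ∈ (0,1)
    (hκ0 : 0 < κ) (hκ1 : κ < 1)
    (h𝒢_bound : ∀ x : ℝ → ℝ, ContinuousOn x (Set.Icc a b) →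
      |𝒢 x| ≤ κ * supNorm a b x)
    (h𝒢_cont : ∀ x : ℝ → ℝ, ContinuousOn x (Set.Icc a b) → ∀ ε > 0, ∃ δ > 0,
      ∀ y : ℝ → ℝ, ContinuousOn y (Set.Icc a b) →
        supNorm a b (fun t => x t - y t) < δ → |𝒢 x - 𝒢 y| < ε)
    -- (ii) growth and continuity conditions on f
    (hf_meas : ∀ u : ℝ,
      AEStronglyMeasurable (fun t => f t u) (volume.restrict (Set.Ioo a b)))
    (hκ₁_meas : AEStronglyMeasurable κ₁ (volume.restrict (Set.Ioo a b)))
    (hκ₂_meas : AEStronglyMeasurable κ₂ (volume.restrict (Set.Ioo a b)))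
    (hκ₁_nonneg : ∀ t ∈ Set.Ioo a b, 0 ≤ κ₁ t)
    (hκ₂_nonneg : ∀ t ∈ Set.Ioo a b, 0 ≤ κ₂ t)
    (hκ₁_int : IntervalIntegrable (fun t => ψd t * κ₁ t) volume a b)
    (hκ₂_int : IntervalIntegrable (fun t => ψd t * κ₂ t) volume a b)
    (hΨ_nonneg : ∀ s ∈ Set.Ici (0 : ℝ), 0 ≤ Ψ s)
    (hΨ_mono : MonotoneOn Ψ (Set.Ici (0 : ℝ)))
    (hf_growth : ∀ t ∈ Set.Ioo a b, ∀ u : ℝ, |f t u| ≤ κ₁ t * Ψ |u|)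
    (hf_lip : ∀ t ∈ Set.Ioo a b, ∀ u v : ℝ, |f t u - f t v| ≤ κ₂ t * |Φ u v|)
    (hΦ_cont : Continuous fun p : ℝ × ℝ => Φ p.1 p.2)
    (hΦ_small : ∀ ε > 0, ∃ δ > 0, ∀ u v : ℝ, |u - v| < δ → |Φ u v| < ε)
    -- (iii) the norm condition
    (hM : 0 < M)
    (hM_ineq : Ψ M * ((ψ b - ψ a) ^ (α + β - 1) / Real.Gamma (α + β)) *
        (∫ τ in a..b, ψd τ * κ₁ τ) < (1 - κ) * M) :
    ∃ x : ℝ → ℝ, ContinuousOn x (Set.Icc a b) ∧ supNorm a b x ≤ M ∧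
      ∀ t ∈ Set.Icc a b,
        x t = ((ψ t - ψ a) / (ψ b - ψ a)) ^ β * 𝒢 x +
          ∫ τ in a..b, G a b α β ψ τ t * ψd τ * f τ (x τ) := by
  set L := ψ b - ψ a with hL
  have haI : a ∈ Icc a b := ⟨le_rfl, hab.le⟩
  have hbI : b ∈ Icc a b := ⟨hab.le, le_rfl⟩
  have hψc : ContinuousOn ψ (Icc a b) := fun t ht => (hψ t ht).continuousAt.continuousWithinAt
  have hψm : StrictMonoOn ψ (Icc a b) := by
    refine strictMonoOn_of_deriv_pos (convex_Icc a b) hψc fun t ht => ?_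
    have ht' := interior_subset ht
    rw [(hψ t ht').deriv]
    exact hψd_pos t ht'
  have hL0 : 0 < L := sub_pos.2 (hψm haI hbI hab)
  have hΓ : 0 < Real.Gamma (α + β) := Real.Gamma_pos_of_pos (by linarith)
  have hγ : 0 < α + β - 1 := by linarith
  let P : ℝ → ℝ := fun t => ψ (projIcc a b hab.le t)
  have hPc : Continuous P := (continuousOn_iff_continuous_restrict.1 hψc).comp continuous_projIcc
  have hPm : Monotone P := fun s t hst =>
    hψm.monotoneOn (projIcc a b hab.le s).2 (projIcc a b hab.le t).2 (monotone_projIcc hab.le hst)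
  have hPI : ∀ t ∈ Icc a b, P t = ψ t := fun t ht => by
    simp only [P, projIcc_of_mem hab.le ht]
  have hPP : ∀ t, P (projIcc a b hab.le t) = P t := fun t => by
    simp only [P, projIcc_val]
  have hPa : ∀ t, ψ a ≤ P t := fun t =>
    hψm.monotoneOn haI (projIcc a b hab.le t).2 (projIcc a b hab.le t).2.1
  have hPb : ∀ t, P t ≤ ψ b := fun t =>
    hψm.monotoneOn (projIcc a b hab.le t).2 hbI (projIcc a b hab.le t).2.2
  clear_value P
  let k : ℝ → ℝ → ℝ := fun t τ => (max (P t - P τ) 0) ^ (α + β - 1) / Real.Gamma (α + β)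
  let p : ℝ → ℝ := fun t => ((P t - ψ a) / L) ^ β
  set K := L ^ (α + β - 1) / Real.Gamma (α + β) with hKdef
  have hK : 0 ≤ K := by positivity
  have hkn : ∀ t τ, 0 ≤ k t τ := fun t τ => by simp only [k]; positivity
  have hkle : ∀ t τ, k t τ ≤ K := fun t τ => by
    simp only [k, hKdef]
    gcongr
    refine max_le ?_ hL0.le
    have := hPa τ
    have := hPb t
    linarith
  have hkK : ∀ t τ, |k t τ| ≤ K := fun t τ => by
    rw [abs_of_nonneg (hkn t τ)]; exact hkle t τ
  have hpn : ∀ t, 0 ≤ p t := fun t =>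
    Real.rpow_nonneg (div_nonneg (sub_nonneg.2 (hPa t)) hL0.le) _
  have hple : ∀ t, p t ≤ 1 := fun t => by
    refine Real.rpow_le_one (div_nonneg (sub_nonneg.2 (hPa t)) hL0.le) ?_ hβ0.le
    rw [div_le_one hL0]
    linarith [hPb t]
  have hp1 : ∀ t, |p t| ≤ 1 := fun t => by rw [abs_of_nonneg (hpn t)]; exact hple t
  have hk : Continuous fun z : ℝ × ℝ => k z.1 z.2 := by
    simp only [k]
    refine Continuous.div_const (Continuous.rpow_const (by fun_prop) fun _ => Or.inr hγ.le) _
  have hp : Continuous p := by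
    simp only [p]
    exact Continuous.rpow_const (by fun_prop) fun _ => Or.inr hβ0.le
  have hk0 : ∀ t τ, t ≤ τ → k t τ = 0 := fun t τ h => by
    simp only [k]
    rw [max_eq_right (sub_nonpos.2 (hPm h)), Real.zero_rpow hγ.ne', zero_div]
  have hp0 : ∀ t ≤ a, p t = 0 := fun t h => by
    have h1 : P t = ψ a := le_antisymm ((hPm h).trans (hPI a haI).le) (hPa t)
    simp only [p, h1, sub_self, zero_div, Real.zero_rpow hβ0.ne']
  have hpb : p b = 1 := by
    simp only [p, hPI b hbI]
    rw [← hL, div_self hL0.ne', Real.one_rpow]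
  -- the nonlinearity, truncated
  let μ : Measure ℝ := volume.restrict (Ioo a b)
  let cl : ℝ → ℝ := fun u => max (-M) (min M u)
  have hclc : Continuous cl := by simp only [cl]; fun_prop
  have hclM : ∀ u, |cl u| ≤ M := fun u =>
    abs_le.2 ⟨le_max_left _ _, max_le (by linarith) (min_le_left _ _)⟩
  have hcle : ∀ u, |u| ≤ M → cl u = u := fun u hu => by
    have := abs_le.1 hu
    simp only [cl]
    rw [min_eq_right this.2, max_eq_right this.1]
  clear_value cl
  let F : ℝ → ℝ → ℝ := fun τ u => ψd τ * f τ (cl u)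
  let H : ℝ → ℝ := fun τ => ψd τ * κ₁ τ * Ψ M
  have hμ : ∀ᵐ τ ∂μ, τ ∈ Ioo a b := ae_restrict_mem measurableSet_Ioo
  have hm : ∀ u, AEStronglyMeasurable (fun τ => F τ u) μ := fun u =>
    ((hψd_cont.mono Ioo_subset_Icc_self).aestronglyMeasurable measurableSet_Ioo).mul (hf_meas _)
  have hfc : ∀ τ ∈ Ioo a b, Continuous (f τ) := by
    intro τ hτ
    rw [Metric.continuous_iff]
    intro u ε hε
    have hκ := hκ₂_nonneg τ hτ
    obtain ⟨δ, hδ, h⟩ := hΦ_small (ε / (κ₂ τ + 1)) (by positivity)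
    refine ⟨δ, hδ, fun v hv => ?_⟩
    have h1 := h v u hv
    rw [Real.dist_eq]
    refine (hf_lip τ hτ v u).trans_lt ?_
    rw [lt_div_iff₀ (by positivity)] at h1
    nlinarith [abs_nonneg (Φ v u)]
  have hc : ∀ᵐ τ ∂μ, Continuous (F τ) := by
    filter_upwards [hμ] with τ hτ
    exact ((hfc τ hτ).comp hclc).const_mul _
  have hb : ∀ᵐ τ ∂μ, ∀ u, |F τ u| ≤ H τ := by
    filter_upwards [hμ] with τ hτ u
    have h1 := hψd_pos τ (Ioo_subset_Icc_self hτ)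
    simp only [F, H]
    rw [abs_mul, abs_of_pos h1, mul_assoc]
    refine mul_le_mul_of_nonneg_left ((hf_growth τ hτ _).trans ?_) h1.le
    exact mul_le_mul_of_nonneg_left (hΨ_mono (mem_Ici.2 (abs_nonneg _)) (mem_Ici.2 hM.le) (hclM u)) (hκ₁_nonneg τ hτ)
  have hH : Integrable H μ := by
    refine Integrable.mul_const ?_ _
    rw [intervalIntegrable_iff_integrableOn_Ioo_of_le hab.le] at hκ₁_int
    exact hκ₁_int
  have hHint : ∫ τ, H τ ∂μ = Ψ M * ∫ τ in a..b, ψd τ * κ₁ τ := by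
    rw [intervalIntegral.integral_of_le hab.le, integral_Ioc_eq_integral_Ioo, mul_comm]
    exact integral_mul_const _ _
  have hsup : ∀ (y : ℝ → ℝ) R, (∀ t ∈ Icc a b, |y t| ≤ R) → supNorm a b y ≤ R := by
    intro y R h
    haveI : Nonempty (Icc a b) := ⟨⟨a, haI⟩⟩
    exact ciSup_le fun t => h t t.2
  obtain ⟨x, hx, hxeq⟩ := abs_exist (μ := μ) (F := F) (H := H) (k := k) (K := K) hab hμ hm hc hb hH
    hk hK hkK hk0 (fun t τ => by simp only [k, hPP]) hp hp0 hpb hp1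
    (fun t => by simp only [p, hPP]) 𝒢 hκ1 hκ0
    (fun y hy R hR => (h𝒢_bound y hy.continuousOn).trans
      (mul_le_mul_of_nonneg_left (hsup y R hR) hκ0.le))
    (fun ys y hys hy hlim => by
      rw [Metric.tendsto_atTop]
      intro ε hε
      obtain ⟨δ, hδ, h⟩ := h𝒢_cont y hy.continuousOn ε hε
      rw [Metric.tendstoUniformlyOn_iff] at hlim
      obtain ⟨N, hN⟩ := Filter.eventually_atTop.1 (hlim (δ / 2) (by positivity))
      refine ⟨N, fun n hn => ?_⟩
      rw [dist_comm, Real.dist_eq]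
      refine h (ys n) (hys n).continuousOn ((hsup _ (δ / 2) fun t ht => ?_).trans_lt (by linarith))
      exact (hN n hn t ht).le)
  have hk1 : ∀ t, Continuous (k t) := fun t => hk.comp (by fun_prop : Continuous fun τ => (t, τ))
  have hxeq' : ∀ t ∈ Icc a b, x t = p t * 𝒢 x + ∫ τ, (p t * k b τ - k t τ) * F τ (x τ) ∂μ := by
    intro t ht
    have h1 := kF_int hm hc hb hH hx.measurable (hk1 b) (hkK b)
    have h2 := kF_int hm hc hb hH hx.measurable (hk1 t) (hkK t)
    have h3 : ∫ τ, (p t * k b τ - k t τ) * F τ (x τ) ∂μ =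
        p t * (∫ τ, k b τ * F τ (x τ) ∂μ) - ∫ τ, k t τ * F τ (x τ) ∂μ := by
      rw [← integral_const_mul, ← integral_sub (h1.const_mul _) h2]
      congr 1; funext τ; ring
    rw [h3, hxeq t ht]; ring
  have hGK : ∀ t τ, |p t * k b τ - k t τ| ≤ K := fun t τ => by
    have h1 : p t * k b τ ≤ K :=
      (mul_le_of_le_one_left (hkn b τ) (hple t)).trans (hkle b τ)
    have h2 : 0 ≤ p t * k b τ := mul_nonneg (hpn t) (hkn b τ)
    rw [abs_le]
    constructor
    · linarith [hkle t τ]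
    · linarith [hkn t τ]
  have hxM : ∀ t ∈ Icc a b, |x t| ≤ M := by
    obtain ⟨t₀, ht₀, hmax⟩ := isCompact_Icc.exists_isMaxOn ⟨a, haI⟩ (hx.abs.continuousOn (s := Icc a b))
    have hmax' : ∀ t ∈ Icc a b, |x t| ≤ |x t₀| := fun t ht => hmax ht
    have h1 : |𝒢 x| ≤ κ * |x t₀| := (h𝒢_bound x hx.continuousOn).trans
      (mul_le_mul_of_nonneg_left (hsup x _ hmax') hκ0.le)
    have h2 : |x t₀| ≤ κ * |x t₀| + K * ∫ τ, H τ ∂μ := by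
      conv_lhs => rw [hxeq' t₀ ht₀]
      refine (abs_add_le _ _).trans (add_le_add ?_ ?_)
      · rw [abs_mul]
        exact (mul_le_of_le_one_left (abs_nonneg _) (hp1 t₀)).trans h1
      · exact kF_bound hb hH x hK (Filter.Eventually.of_forall (hGK t₀))
    rw [hHint] at h2
    have h3 : (1 - κ) * |x t₀| < (1 - κ) * M := by
      refine lt_of_le_of_lt ?_ hM_ineq
      linarith
    have h4 := lt_of_mul_lt_mul_left h3 (by linarith)
    exact fun t ht => (hmax' t ht).trans h4.le
  refine ⟨x, hx.continuousOn, hsup x M hxM, fun t ht => ?_⟩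
  rw [intervalIntegral.integral_of_le hab.le, integral_Ioc_eq_integral_Ioo]
  conv_lhs => rw [hxeq' t ht]
  congr 1
  · simp only [p, hPI t ht]
  · refine setIntegral_congr_fun measurableSet_Ioo fun τ hτ => ?_
    have hτ' := Ioo_subset_Icc_self hτ
    simp only [F]
    rw [hcle _ (hxM τ hτ'), ← mul_assoc]
    congr 2
    have hbτ : k b τ = (ψ b - ψ τ) ^ (α + β - 1) / Real.Gamma (α + β) := by
      simp only [k, hPI b hbI, hPI τ hτ']
      rw [max_eq_left (sub_nonneg.2 (hψm.monotoneOn hτ' hbI hτ'.2))]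
    have hpt : p t = (ψ t - ψ a) ^ β / L ^ β := by
      simp only [p, hPI t ht]
      exact Real.div_rpow (sub_nonneg.2 (hψm.monotoneOn haI ht ht.1)) hL0.le _
    have hLβ : L ^ β ≠ 0 := (Real.rpow_pos_of_pos hL0 _).ne'
    have hmain : p t * k b τ = (ψ t - ψ a) ^ β * (ψ b - ψ τ) ^ (α + β - 1) /
        (Real.Gamma (α + β) * (ψ b - ψ a) ^ β) := by
      rw [hbτ, hpt, ← hL]
      field_simp
    rw [hmain, G]
    split_ifs with h
    · simp only [k, hPI t ht, hPI τ hτ']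
      rw [max_eq_left (sub_nonneg.2 (hψm.monotoneOn hτ' ht h))]
    · rw [hk0 t τ (not_le.1 h).le, sub_zero]
end

section
/- (Equicontinuity estimate for the solution operator) Under the hypotheses: |𝒢(x)| ≤ κ·‖x‖ for all x ∈ C([a,b],ℝ) with κ ∈ (0,1), |f(t,x)| ≤ κ₁(t)·Ψ(|x|) for all t ∈ (a,b) and x ∈ ℝ with κ₁ measurable, ψ'·κ₁ ∈ L¹(a,b), Ψ: [0,∞) → [0,∞) nondecreasing; for every r > 0, every continuous x: [a,b] → ℝ with ‖x‖ ≤ r such that t ↦ f(t,x(t)) is measurable, and all a ≤ t₁ ≤ t₂ ≤ b, one has |Sx(t₂) − Sx(t₁)| ≤ κ·r·((ψ(t₂)−ψ(t₁))/L)^β + (2/Γ(α+β))·(ψ(t₂)−ψ(t₁))^{α+β−1}·Ψ(r)·∫_a^b ψ'(τ)κ₁(τ) dτ. -/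
open MeasureTheory Set

/-- The solution operator `S` of the boundary value problem. -/
noncomputable def Sop (a b α β : ℝ) (ψ ψd : ℝ → ℝ) (f : ℝ → ℝ → ℝ)
    (𝒢 : (ℝ → ℝ) → ℝ) (x : ℝ → ℝ) (t : ℝ) : ℝ :=
  ((ψ t - ψ a) / (ψ b - ψ a)) ^ β * 𝒢 x +
    ∫ τ in a..b, G a b α β ψ τ t * ψd τ * f τ (x τ)

theorem aux_holder {x y q : ℝ} (hx : 0 ≤ x) (hxy : x ≤ y) (hq : 0 ≤ q) (hq1 : q ≤ 1) :
    y ^ q - x ^ q ≤ (y - x) ^ q := by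
  have h := Real.rpow_add_le_add_rpow hx (sub_nonneg.2 hxy) hq hq1
  rw [add_sub_cancel] at h
  linarith

/-- Continuous formula for the Green function. -/
noncomputable def Gc (a b α β : ℝ) (ψ : ℝ → ℝ) (τ t : ℝ) : ℝ :=
  (((ψ t - ψ a) / (ψ b - ψ a)) ^ β * (ψ b - ψ τ) ^ (α + β - 1) -
    (max (ψ t - ψ τ) 0) ^ (α + β - 1)) / Real.Gamma (α + β)

theorem G_eq_Gc {a b α β : ℝ} {ψ : ℝ → ℝ} (hψ : MonotoneOn ψ (Icc a b))
    (hαβ : 1 < α + β) {τ t : ℝ} (hτ : τ ∈ Icc a b) (ht : t ∈ Icc a b) :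
    G a b α β ψ τ t = Gc a b α β ψ τ t := by
  have hb : b ∈ Icc a b := ⟨hτ.1.trans hτ.2, le_rfl⟩
  have ha : a ∈ Icc a b := ⟨le_rfl, hτ.1.trans hτ.2⟩
  have h1 : 0 ≤ ψ t - ψ a := sub_nonneg.2 (hψ ha ht ht.1)
  have h2 : 0 ≤ ψ b - ψ a := sub_nonneg.2 (hψ ha hb hb.1)
  unfold G Gc
  rw [Real.div_rpow h1 h2]
  split_ifs with h
  · rw [max_eq_left (sub_nonneg.2 (hψ hτ ht h))]
    ring
  · rw [max_eq_right (sub_nonpos.2 (hψ ht hτ (not_le.1 h).le)),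
      Real.zero_rpow (by linarith)]
    ring

theorem Gc_diff {a b α β : ℝ} {ψ : ℝ → ℝ} (hψ : MonotoneOn ψ (Icc a b))
    (hL : 0 < ψ b - ψ a) (hα1 : α ≤ 1) (hβ0 : 0 < β) (hβ1 : β ≤ 1)
    (hαβ : 1 < α + β) {τ t₁ t₂ : ℝ} (hτ : τ ∈ Icc a b) (ht₁ : t₁ ∈ Icc a b)
    (ht₂ : t₂ ∈ Icc a b) (h12 : t₁ ≤ t₂) :
    |Gc a b α β ψ τ t₂ - Gc a b α β ψ τ t₁| ≤
      2 / Real.Gamma (α + β) * (ψ t₂ - ψ t₁) ^ (α + β - 1) := by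
  have hb : b ∈ Icc a b := ⟨hτ.1.trans hτ.2, le_rfl⟩
  have ha : a ∈ Icc a b := ⟨le_rfl, hτ.1.trans hτ.2⟩
  have hΓ : 0 < Real.Gamma (α + β) := Real.Gamma_pos_of_pos (by linarith)
  have h1 : 0 ≤ ψ t₁ - ψ a := sub_nonneg.2 (hψ ha ht₁ ht₁.1)
  have hd : 0 ≤ ψ t₂ - ψ t₁ := sub_nonneg.2 (hψ ht₁ ht₂ h12)
  have h2b : ψ t₂ ≤ ψ b := hψ ht₂ hb ht₂.2
  have hτa : ψ a ≤ ψ τ := hψ ha hτ hτ.1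
  have hτb : ψ τ ≤ ψ b := hψ hτ hb hτ.2
  have hp : 0 < α + β - 1 := by linarith
  set p := α + β - 1 with hpdef
  set L := ψ b - ψ a with hLdef
  have hD : 0 ≤ (ψ t₂ - ψ t₁) ^ p := Real.rpow_nonneg hd _
  have hA0 : 0 ≤ ((ψ t₂ - ψ a) / L) ^ β - ((ψ t₁ - ψ a) / L) ^ β := by
    rw [sub_nonneg]
    apply Real.rpow_le_rpow (by positivity) _ hβ0.le
    gcongr
    linarith
  have hA1 : ((ψ t₂ - ψ a) / L) ^ β - ((ψ t₁ - ψ a) / L) ^ β ≤ ((ψ t₂ - ψ t₁) / L) ^ p := by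
    have := aux_holder (x := (ψ t₁ - ψ a) / L) (y := (ψ t₂ - ψ a) / L) (q := β)
      (by positivity) (by gcongr; linarith) hβ0.le hβ1
    refine this.trans ?_
    rw [← sub_div, sub_sub_sub_cancel_right]
    rcases hd.eq_or_lt with h | h
    · rw [← h, zero_div, Real.zero_rpow hβ0.ne', Real.zero_rpow hp.ne']
    · apply Real.rpow_le_rpow_of_exponent_ge (by positivity)
      · rw [div_le_one hL]; linarith
      · linarith
  have hA2 : (((ψ t₂ - ψ a) / L) ^ β - ((ψ t₁ - ψ a) / L) ^ β) * (ψ b - ψ τ) ^ p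
      ≤ (ψ t₂ - ψ t₁) ^ p := by
    calc _ ≤ ((ψ t₂ - ψ t₁) / L) ^ p * L ^ p := by
          apply mul_le_mul hA1 _ (Real.rpow_nonneg (by linarith) _) (by positivity)
          exact Real.rpow_le_rpow (by linarith) (by linarith) hp.le
      _ = _ := by
          rw [← Real.mul_rpow (by positivity) hL.le, div_mul_cancel₀ _ hL.ne']
  have hA3 : 0 ≤ (((ψ t₂ - ψ a) / L) ^ β - ((ψ t₁ - ψ a) / L) ^ β) * (ψ b - ψ τ) ^ p :=
    mul_nonneg hA0 (Real.rpow_nonneg (by linarith) _)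
  have hm : max (ψ t₁ - ψ τ) 0 ≤ max (ψ t₂ - ψ τ) 0 := max_le_max (by linarith) le_rfl
  have hB0 : (max (ψ t₁ - ψ τ) 0) ^ p ≤ (max (ψ t₂ - ψ τ) 0) ^ p :=
    Real.rpow_le_rpow (le_max_right _ _) hm hp.le
  have hB1 : (max (ψ t₂ - ψ τ) 0) ^ p - (max (ψ t₁ - ψ τ) 0) ^ p ≤ (ψ t₂ - ψ t₁) ^ p := by
    refine (aux_holder (le_max_right _ _) hm hp.le (by linarith)).trans ?_
    apply Real.rpow_le_rpow (by linarith) _ hp.le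
    have : max (ψ t₂ - ψ τ) 0 ≤ max (ψ t₁ - ψ τ) 0 + (ψ t₂ - ψ t₁) :=
      max_le (by linarith [le_max_left (ψ t₁ - ψ τ) 0]) (by linarith [le_max_right (ψ t₁ - ψ τ) 0])
    linarith
  unfold Gc
  rw [← hpdef, ← hLdef, ← sub_div, abs_div, abs_of_pos hΓ, div_mul_eq_mul_div]
  gcongr
  rw [abs_le]
  constructor <;> nlinarith

theorem Gc_cont {a b α β : ℝ} {ψ : ℝ → ℝ} (hψ : ContinuousOn ψ (Icc a b))
    (hαβ : 1 < α + β) (t : ℝ) : ContinuousOn (fun τ => Gc a b α β ψ τ t) (Icc a b) := by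
  unfold Gc
  have hp : 0 ≤ α + β - 1 := by linarith
  refine ContinuousOn.div_const (ContinuousOn.sub (ContinuousOn.mul continuousOn_const ?_) ?_) _
  · exact (continuousOn_const.sub hψ).rpow_const (fun _ _ => Or.inr hp)
  · exact ((continuousOn_const.sub hψ).sup continuousOn_const).rpow_const (fun _ _ => Or.inr hp)

theorem solution_operator_equicontinuity
    (a b α β κ : ℝ) (hab : a < b)
    (hα0 : 0 < α) (hα1 : α ≤ 1) (hβ0 : 0 < β) (hβ1 : β ≤ 1) (hαβ : 1 < α + β)
    (ψ ψd : ℝ → ℝ)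
    (hψ : ∀ t ∈ Set.Icc a b, HasDerivAt ψ (ψd t) t)
    (hψd_cont : ContinuousOn ψd (Set.Icc a b))
    (hψd_pos : ∀ t ∈ Set.Icc a b, 0 < ψd t)
    (f : ℝ → ℝ → ℝ) (𝒢 : (ℝ → ℝ) → ℝ) (κ₁ Ψ : ℝ → ℝ)
    (hκ0 : 0 < κ) (hκ1 : κ < 1)
    (h𝒢_bound : ∀ x : ℝ → ℝ, ContinuousOn x (Set.Icc a b) →
      |𝒢 x| ≤ κ * supNorm a b x)
    (hf_meas : ∀ u : ℝ,
      AEStronglyMeasurable (fun t => f t u) (volume.restrict (Set.Ioo a b)))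
    (hκ₁_meas : AEStronglyMeasurable κ₁ (volume.restrict (Set.Ioo a b)))
    (hκ₁_nonneg : ∀ t ∈ Set.Ioo a b, 0 ≤ κ₁ t)
    (hκ₁_int : IntervalIntegrable (fun t => ψd t * κ₁ t) volume a b)
    (hΨ_nonneg : ∀ s ∈ Set.Ici (0 : ℝ), 0 ≤ Ψ s)
    (hΨ_mono : MonotoneOn Ψ (Set.Ici (0 : ℝ)))
    (hf_growth : ∀ t ∈ Set.Ioo a b, ∀ u : ℝ, |f t u| ≤ κ₁ t * Ψ |u|) :
    ∀ r > (0 : ℝ), ∀ x : ℝ → ℝ, ContinuousOn x (Set.Icc a b) →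
      supNorm a b x ≤ r →
      AEStronglyMeasurable (fun t => f t (x t)) (volume.restrict (Set.Ioo a b)) →
      ∀ t₁ t₂, a ≤ t₁ → t₁ ≤ t₂ → t₂ ≤ b →
        |Sop a b α β ψ ψd f 𝒢 x t₂ - Sop a b α β ψ ψd f 𝒢 x t₁| ≤
          κ * r * ((ψ t₂ - ψ t₁) / (ψ b - ψ a)) ^ β +
            2 / Real.Gamma (α + β) * (ψ t₂ - ψ t₁) ^ (α + β - 1) * Ψ r *
              ∫ τ in a..b, ψd τ * κ₁ τ := by
  intro r hr x hx hxr hfx t₁ t₂ hat₁ h12 ht₂b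
  have hψc : ContinuousOn ψ (Icc a b) := fun t ht => (hψ t ht).continuousAt.continuousWithinAt
  have hsm : StrictMonoOn ψ (Icc a b) := by
    apply strictMonoOn_of_deriv_pos (convex_Icc a b) hψc
    intro t ht
    have ht' := interior_subset ht
    rw [(hψ t ht').deriv]
    exact hψd_pos t ht'
  have hmono := hsm.monotoneOn
  have ha : a ∈ Icc a b := ⟨le_rfl, hab.le⟩
  have hb : b ∈ Icc a b := ⟨hab.le, le_rfl⟩
  have ht₁ : t₁ ∈ Icc a b := ⟨hat₁, h12.trans ht₂b⟩
  have ht₂ : t₂ ∈ Icc a b := ⟨hat₁.trans h12, ht₂b⟩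
  have hL : 0 < ψ b - ψ a := sub_pos.2 (hsm ha hb hab)
  have h1 : 0 ≤ ψ t₁ - ψ a := sub_nonneg.2 (hmono ha ht₁ ht₁.1)
  have hd : 0 ≤ ψ t₂ - ψ t₁ := sub_nonneg.2 (hmono ht₁ ht₂ h12)
  have hxb : ∀ t ∈ Icc a b, |x t| ≤ r := by
    intro t ht
    refine le_trans ?_ hxr
    have hbdd : BddAbove (range fun t : Icc a b => |x t|) := by
      have := (isCompact_Icc.image_of_continuousOn hx.abs).bddAbove
      rwa [image_eq_range] at this
    exact le_ciSup hbdd ⟨t, ht⟩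
  have hG0 : |𝒢 x| ≤ κ * r := (h𝒢_bound x hx).trans (by gcongr)
  have hfb : ∀ τ ∈ Ioo a b, |ψd τ * f τ (x τ)| ≤ Ψ r * (ψd τ * κ₁ τ) := by
    intro τ hτ
    have hτ' := Ioo_subset_Icc_self hτ
    have hp := hψd_pos τ hτ'
    rw [abs_mul, abs_of_pos hp]
    have h2 : Ψ |x τ| ≤ Ψ r := hΨ_mono (mem_Ici.2 (abs_nonneg _)) (mem_Ici.2 hr.le) (hxb τ hτ')
    have h3 := (hf_growth τ hτ (x τ)).trans (mul_le_mul_of_nonneg_left h2 (hκ₁_nonneg τ hτ))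
    calc _ ≤ ψd τ * (κ₁ τ * Ψ r) := by gcongr
      _ = _ := by ring
  have hIooae : ∀ᵐ τ ∂(volume.restrict (Ioo a b)), τ ∈ Ioo a b := ae_restrict_mem measurableSet_Ioo
  have hFint : IntervalIntegrable (fun τ => ψd τ * f τ (x τ)) volume a b := by
    rw [intervalIntegrable_iff_integrableOn_Ioo_of_le hab.le] at hκ₁_int ⊢
    refine Integrable.mono' (hκ₁_int.const_mul (Ψ r)) ?_ ?_
    · exact ((hψd_cont.mono Ioo_subset_Icc_self).aestronglyMeasurable measurableSet_Ioo).mul hfx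
    · filter_upwards [hIooae] with τ hτ using hfb τ hτ
  have hGint : ∀ t, IntervalIntegrable
      (fun τ => Gc a b α β ψ τ t * (ψd τ * f τ (x τ))) volume a b := by
    intro t
    apply hFint.continuousOn_mul
    rw [uIcc_of_le hab.le]
    exact Gc_cont hψc hαβ t
  have hGeq : ∀ t ∈ Icc a b, (∫ τ in a..b, G a b α β ψ τ t * ψd τ * f τ (x τ)) =
      ∫ τ in a..b, Gc a b α β ψ τ t * (ψd τ * f τ (x τ)) := by
    intro t ht
    apply intervalIntegral.integral_congr
    intro τ hτ
    rw [uIcc_of_le hab.le] at hτ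
    simp only [G_eq_Gc hmono hαβ hτ ht, mul_assoc]
  unfold Sop
  rw [hGeq t₁ ht₁, hGeq t₂ ht₂]
  have hI : |(∫ τ in a..b, Gc a b α β ψ τ t₂ * (ψd τ * f τ (x τ))) -
      ∫ τ in a..b, Gc a b α β ψ τ t₁ * (ψd τ * f τ (x τ))| ≤
      2 / Real.Gamma (α + β) * (ψ t₂ - ψ t₁) ^ (α + β - 1) * Ψ r *
              ∫ τ in a..b, ψd τ * κ₁ τ := by
    rw [← intervalIntegral.integral_sub (hGint t₂) (hGint t₁), mul_assoc,
      ← intervalIntegral.integral_const_mul, ← intervalIntegral.integral_const_mul]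
    rw [intervalIntegral.integral_of_le hab.le, intervalIntegral.integral_of_le hab.le,
      integral_Ioc_eq_integral_Ioo, integral_Ioc_eq_integral_Ioo, ← Real.norm_eq_abs]
    apply norm_integral_le_of_norm_le
    · rw [intervalIntegrable_iff_integrableOn_Ioo_of_le hab.le] at hκ₁_int
      exact (hκ₁_int.const_mul (Ψ r)).const_mul _
    · filter_upwards [hIooae] with τ hτ
      rw [← sub_mul, Real.norm_eq_abs, abs_mul]
      have h4 := Gc_diff hmono hL hα1 hβ0 hβ1 hαβ (Ioo_subset_Icc_self hτ) ht₁ ht₂ h12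
      exact mul_le_mul h4 (hfb τ hτ) (abs_nonneg _) ((abs_nonneg _).trans h4)
  have hJ : |((ψ t₂ - ψ a) / (ψ b - ψ a)) ^ β * 𝒢 x - ((ψ t₁ - ψ a) / (ψ b - ψ a)) ^ β * 𝒢 x| ≤
      κ * r * ((ψ t₂ - ψ t₁) / (ψ b - ψ a)) ^ β := by
    have hle : (ψ t₁ - ψ a) / (ψ b - ψ a) ≤ (ψ t₂ - ψ a) / (ψ b - ψ a) := by
      gcongr
      linarith
    have hx0 : 0 ≤ (ψ t₁ - ψ a) / (ψ b - ψ a) := by positivity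
    have h5 := aux_holder hx0 hle hβ0.le hβ1
    rw [← sub_div, sub_sub_sub_cancel_right] at h5
    rw [← sub_mul, abs_mul,
      abs_of_nonneg (sub_nonneg.2 (Real.rpow_le_rpow hx0 hle hβ0.le)), mul_comm]
    exact mul_le_mul hG0 h5 (sub_nonneg.2 (Real.rpow_le_rpow hx0 hle hβ0.le)) (by positivity)
  rw [add_sub_add_comm]
  exact (abs_add_le _ _).trans (add_le_add hJ hI)
end

section
/- (Continuity of the solution operator) Suppose 𝒢: C([a,b],ℝ) → ℝ is continuous, f(·,u) is measurable for each u ∈ ℝ, |f(t,x)−f(t,y)| ≤ κ₂(t)·|Φ(x,y)| for all t ∈ (a,b) and x, y ∈ ℝ, where κ₂: (a,b) → [0,∞) is measurable with ψ'·κ₂ ∈ L¹(a,b), and Φ: ℝ×ℝ → ℝ is continuous with the property that for every ε > 0 there is δ > 0 such that |x−y| < δ implies |Φ(x,y)| < ε, and additionally |f(t,x)| ≤ κ₁(t)·Ψ(|x|) with κ₁ measurable, ψ'·κ₁ ∈ L¹(a,b) and Ψ: [0,∞) → [0,∞) nondecreasing (so that S is well defined). Then the operator S maps C([a,b],ℝ)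 into C([a,b],ℝ) and is continuous with respect to the supremum norm; in particular ‖Sx − Sy‖ ≤ |𝒢(x)−𝒢(y)| + G_max·(sup_{τ∈[a,b]} |Φ(x(τ),y(τ))|)·∫_a^b ψ'(τ)κ₂(τ) dτ, where G_max = L^{α+β−1}/Γ(α+β). -/
open MeasureTheory Set

theorem aux_carath (a b : ℝ) (f : ℝ → ℝ → ℝ) (x : ℝ → ℝ) (hx : Measurable x)
    (hf_meas : ∀ u : ℝ,
      AEStronglyMeasurable (fun t => f t u) (volume.restrict (Set.Ioo a b)))
    (hf_cont : ∀ t ∈ Set.Ioo a b, Continuous (f t)) :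
    AEStronglyMeasurable (fun t => f t (x t)) (volume.restrict (Set.Ioo a b)) := by
  have key : ∀ n : ℕ, AEStronglyMeasurable
      (fun t => f t ((⌊x t * ((n : ℝ) + 1)⌋ : ℝ) / ((n : ℝ) + 1)))
      (volume.restrict (Set.Ioo a b)) := by
    intro n
    have hk : Measurable (fun t => ⌊x t * ((n : ℝ) + 1)⌋) := (hx.mul_const _).floor
    choose g hgm hge using fun k : ℤ => hf_meas ((k : ℝ) / ((n : ℝ) + 1))
    have hg : Measurable (fun p : ℤ × ℝ => g p.1 p.2) :=
      measurable_from_prod_countable_right (fun k => (hgm k).measurable)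
    have hgk : Measurable (fun t : ℝ => g (⌊x t * ((n : ℝ) + 1)⌋) t) :=
      hg.comp (hk.prodMk measurable_id)
    refine ⟨_, hgk.stronglyMeasurable, ?_⟩
    filter_upwards [ae_all_iff.2 hge] with t ht
    exact ht _
  refine aestronglyMeasurable_of_tendsto_ae Filter.atTop key ?_
  refine (ae_restrict_iff' measurableSet_Ioo).2 (Filter.Eventually.of_forall ?_)
  intro t ht
  refine ((hf_cont t ht).tendsto (x t)).comp ?_
  have h0 : Filter.Tendsto (fun n : ℕ => x t - 1 / ((n : ℝ) + 1)) Filter.atTop (nhds (x t)) := by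
    simpa using (tendsto_const_nhds (x := x t)).sub (tendsto_one_div_add_atTop_nhds_zero_nat (𝕜 := ℝ))
  refine tendsto_of_tendsto_of_tendsto_of_le_of_le h0 tendsto_const_nhds ?_ ?_
  · intro n
    have hn : (0 : ℝ) < (n : ℝ) + 1 := by positivity
    have := Int.sub_one_lt_floor (x t * ((n : ℝ) + 1))
    show x t - 1 / ((n : ℝ) + 1) ≤ (⌊x t * ((n : ℝ) + 1)⌋ : ℝ) / ((n : ℝ) + 1)
    rw [le_div_iff₀ hn, sub_mul, one_div, inv_mul_cancel₀ hn.ne']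
    exact this.le
  · intro n
    have hn : (0 : ℝ) < (n : ℝ) + 1 := by positivity
    show (⌊x t * ((n : ℝ) + 1)⌋ : ℝ) / ((n : ℝ) + 1) ≤ x t
    rw [div_le_iff₀ hn]
    exact Int.floor_le _

theorem aux_G_eq (a b α β : ℝ) (ψ : ℝ → ℝ) (hγ : 1 < α + β)
    (hm : StrictMonoOn ψ (Set.Icc a b)) (τ t : ℝ)
    (hτ : τ ∈ Set.Icc a b) (ht : t ∈ Set.Icc a b) :
    G a b α β ψ τ t = (ψ t - ψ a) ^ β * (ψ b - ψ τ) ^ (α + β - 1) /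
        (Real.Gamma (α + β) * (ψ b - ψ a) ^ β) -
      (max (ψ t - ψ τ) 0) ^ (α + β - 1) / Real.Gamma (α + β) := by
  unfold G
  split_ifs with h
  · rw [max_eq_left (sub_nonneg.2 ((hm.le_iff_le hτ ht).2 h))]
  · have : ψ t ≤ ψ τ := (hm.le_iff_le ht hτ).2 (not_le.1 h).le
    rw [max_eq_right (sub_nonpos.2 this), Real.zero_rpow (by linarith)]
    simp

theorem aux_G_bound (a b α β : ℝ) (ψ : ℝ → ℝ) (hab : a < b) (hβ : 0 < β) (hγ : 1 < α + β)
    (hm : StrictMonoOn ψ (Set.Icc a b)) (τ t : ℝ)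
    (hτ : τ ∈ Set.Icc a b) (ht : t ∈ Set.Icc a b) :
    |G a b α β ψ τ t| ≤ (ψ b - ψ a) ^ (α + β - 1) / Real.Gamma (α + β) := by
  rw [aux_G_eq a b α β ψ hγ hm τ t hτ ht]
  have ha : a ∈ Set.Icc a b := ⟨le_rfl, hab.le⟩
  have hb : b ∈ Set.Icc a b := ⟨hab.le, le_rfl⟩
  have hG : 0 < Real.Gamma (α + β) := Real.Gamma_pos_of_pos (by linarith)
  have hL : 0 < ψ b - ψ a := sub_pos.2 (hm ha hb hab)
  have h1 := hm.monotoneOn ha ht ht.1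
  have h2 := hm.monotoneOn ht hb ht.2
  have h3 := hm.monotoneOn ha hτ hτ.1
  have h4 := hm.monotoneOn hτ hb hτ.2
  have hLβ : 0 < (ψ b - ψ a) ^ β := Real.rpow_pos_of_pos hL _
  have e1 : (ψ t - ψ a) ^ β ≤ (ψ b - ψ a) ^ β :=
    Real.rpow_le_rpow (by linarith) (by linarith) hβ.le
  have e1' : 0 ≤ (ψ t - ψ a) ^ β := Real.rpow_nonneg (by linarith) _
  have e2 : (ψ b - ψ τ) ^ (α + β - 1) ≤ (ψ b - ψ a) ^ (α + β - 1) :=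
    Real.rpow_le_rpow (by linarith) (by linarith) (by linarith)
  have e2' : 0 ≤ (ψ b - ψ τ) ^ (α + β - 1) := Real.rpow_nonneg (by linarith) _
  have e3 : (max (ψ t - ψ τ) 0) ^ (α + β - 1) ≤ (ψ b - ψ a) ^ (α + β - 1) :=
    Real.rpow_le_rpow (le_max_right _ _) (max_le (by linarith) hL.le) (by linarith)
  have e3' : 0 ≤ (max (ψ t - ψ τ) 0) ^ (α + β - 1) := Real.rpow_nonneg (le_max_right _ _) _
  have f1 : (ψ t - ψ a) ^ β * (ψ b - ψ τ) ^ (α + β - 1) /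
        (Real.Gamma (α + β) * (ψ b - ψ a) ^ β) ≤
        (ψ b - ψ a) ^ (α + β - 1) / Real.Gamma (α + β) := by
    rw [div_le_div_iff₀ (by positivity) hG]
    have := mul_le_mul e1 e2 e2' hLβ.le
    nlinarith
  have f1' : 0 ≤ (ψ t - ψ a) ^ β * (ψ b - ψ τ) ^ (α + β - 1) /
        (Real.Gamma (α + β) * (ψ b - ψ a) ^ β) := by positivity
  have f2 : (max (ψ t - ψ τ) 0) ^ (α + β - 1) / Real.Gamma (α + β) ≤
      (ψ b - ψ a) ^ (α + β - 1) / Real.Gamma (α + β) := by gcongr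
  have f2' : 0 ≤ (max (ψ t - ψ τ) 0) ^ (α + β - 1) / Real.Gamma (α + β) := by positivity
  rw [abs_le]
  constructor <;> linarith

theorem aux_G_cont_left (a b α β : ℝ) (ψ : ℝ → ℝ) (hβ : 0 < β) (hγ : 1 < α + β)
    (hm : StrictMonoOn ψ (Set.Icc a b)) (hc : ContinuousOn ψ (Set.Icc a b)) (t : ℝ)
    (ht : t ∈ Set.Icc a b) :
    ContinuousOn (fun τ => G a b α β ψ τ t) (Set.Icc a b) := by
  refine ContinuousOn.congr (f := fun τ => (ψ t - ψ a) ^ β * (ψ b - ψ τ) ^ (α + β - 1) /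
        (Real.Gamma (α + β) * (ψ b - ψ a) ^ β) -
      (max (ψ t - ψ τ) 0) ^ (α + β - 1) / Real.Gamma (α + β)) ?_
    (fun τ hτ => aux_G_eq a b α β ψ hγ hm τ t hτ ht)
  refine ContinuousOn.sub ?_ ?_
  · refine ContinuousOn.div_const (continuousOn_const.mul ?_) _
    exact (continuousOn_const.sub hc).rpow_const (fun _ _ => Or.inr (by linarith))
  · refine ContinuousOn.div_const ?_ _
    exact ((continuousOn_const.sub hc).sup continuousOn_const).rpow_const
      (fun _ _ => Or.inr (by linarith))

theorem aux_G_cont_right (a b α β : ℝ) (ψ : ℝ → ℝ) (hβ : 0 < β) (hγ : 1 < α + β)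
    (hm : StrictMonoOn ψ (Set.Icc a b)) (hc : ContinuousOn ψ (Set.Icc a b)) (τ : ℝ)
    (hτ : τ ∈ Set.Icc a b) :
    ContinuousOn (fun t => G a b α β ψ τ t) (Set.Icc a b) := by
  refine ContinuousOn.congr (f := fun t => (ψ t - ψ a) ^ β * (ψ b - ψ τ) ^ (α + β - 1) /
        (Real.Gamma (α + β) * (ψ b - ψ a) ^ β) -
      (max (ψ t - ψ τ) 0) ^ (α + β - 1) / Real.Gamma (α + β)) ?_
    (fun t ht => aux_G_eq a b α β ψ hγ hm τ t hτ ht)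
  refine ContinuousOn.sub ?_ ?_
  · refine ContinuousOn.div_const (ContinuousOn.mul ?_ continuousOn_const) _
    exact (hc.sub continuousOn_const).rpow_const (fun _ _ => Or.inr hβ.le)
  · refine ContinuousOn.div_const ?_ _
    exact ((hc.sub continuousOn_const).sup continuousOn_const).rpow_const
      (fun _ _ => Or.inr (by linarith))

theorem aux_bdd (a b : ℝ) (g : ℝ → ℝ) (hg : ContinuousOn g (Set.Icc a b)) :
    BddAbove (Set.range (fun t : Set.Icc a b => |g ↑t|)) := by
  obtain ⟨M, hM⟩ := isCompact_Icc.exists_bound_of_continuousOn hg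
  refine ⟨M, ?_⟩
  rintro _ ⟨t, rfl⟩
  exact hM t t.2

theorem solution_operator_continuous
    (a b α β : ℝ) (hab : a < b)
    (hα0 : 0 < α) (hα1 : α ≤ 1) (hβ0 : 0 < β) (hβ1 : β ≤ 1) (hαβ : 1 < α + β)
    (ψ ψd : ℝ → ℝ)
    (hψ : ∀ t ∈ Set.Icc a b, HasDerivAt ψ (ψd t) t)
    (hψd_cont : ContinuousOn ψd (Set.Icc a b))
    (hψd_pos : ∀ t ∈ Set.Icc a b, 0 < ψd t)
    (f : ℝ → ℝ → ℝ) (𝒢 : (ℝ → ℝ) → ℝ)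
    (κ₁ κ₂ : ℝ → ℝ) (Ψ : ℝ → ℝ) (Φ : ℝ → ℝ → ℝ)
    (h𝒢_cont : ∀ x : ℝ → ℝ, ContinuousOn x (Set.Icc a b) → ∀ ε > 0, ∃ δ > 0,
      ∀ y : ℝ → ℝ, ContinuousOn y (Set.Icc a b) →
        supNorm a b (fun t => x t - y t) < δ → |𝒢 x - 𝒢 y| < ε)
    (hf_meas : ∀ u : ℝ,
      AEStronglyMeasurable (fun t => f t u) (volume.restrict (Set.Ioo a b)))
    (hκ₁_meas : AEStronglyMeasurable κ₁ (volume.restrict (Set.Ioo a b)))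
    (hκ₂_meas : AEStronglyMeasurable κ₂ (volume.restrict (Set.Ioo a b)))
    (hκ₁_nonneg : ∀ t ∈ Set.Ioo a b, 0 ≤ κ₁ t)
    (hκ₂_nonneg : ∀ t ∈ Set.Ioo a b, 0 ≤ κ₂ t)
    (hκ₁_int : IntervalIntegrable (fun t => ψd t * κ₁ t) volume a b)
    (hκ₂_int : IntervalIntegrable (fun t => ψd t * κ₂ t) volume a b)
    (hΨ_nonneg : ∀ s ∈ Set.Ici (0 : ℝ), 0 ≤ Ψ s)
    (hΨ_mono : MonotoneOn Ψ (Set.Ici (0 : ℝ)))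
    (hf_growth : ∀ t ∈ Set.Ioo a b, ∀ u : ℝ, |f t u| ≤ κ₁ t * Ψ |u|)
    (hf_lip : ∀ t ∈ Set.Ioo a b, ∀ u v : ℝ, |f t u - f t v| ≤ κ₂ t * |Φ u v|)
    (hΦ_cont : Continuous fun p : ℝ × ℝ => Φ p.1 p.2)
    (hΦ_small : ∀ ε > 0, ∃ δ > 0, ∀ u v : ℝ, |u - v| < δ → |Φ u v| < ε) :
    (∀ x : ℝ → ℝ, ContinuousOn x (Set.Icc a b) →
      ContinuousOn (Sop a b α β ψ ψd f 𝒢 x) (Set.Icc a b)) ∧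
    (∀ x y : ℝ → ℝ, ContinuousOn x (Set.Icc a b) → ContinuousOn y (Set.Icc a b) →
      supNorm a b (fun t => Sop a b α β ψ ψd f 𝒢 x t - Sop a b α β ψ ψd f 𝒢 y t) ≤
        |𝒢 x - 𝒢 y| + (ψ b - ψ a) ^ (α + β - 1) / Real.Gamma (α + β) *
          (⨆ τ : Set.Icc a b, |Φ (x ↑τ) (y ↑τ)|) * ∫ τ in a..b, ψd τ * κ₂ τ) ∧
    (∀ x : ℝ → ℝ, ContinuousOn x (Set.Icc a b) → ∀ ε > 0, ∃ δ > 0,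
      ∀ y : ℝ → ℝ, ContinuousOn y (Set.Icc a b) →
        supNorm a b (fun t => x t - y t) < δ →
          supNorm a b (fun t => Sop a b α β ψ ψd f 𝒢 x t -
            Sop a b α β ψ ψd f 𝒢 y t) < ε) := by
  have ha : a ∈ Set.Icc a b := ⟨le_rfl, hab.le⟩
  have hb : b ∈ Set.Icc a b := ⟨hab.le, le_rfl⟩
  have hne : Nonempty (Set.Icc a b) := ⟨⟨a, ha⟩⟩
  have hc : ContinuousOn ψ (Set.Icc a b) := fun t ht => (hψ t ht).continuousAt.continuousWithinAt
  have hm : StrictMonoOn ψ (Set.Icc a b) := by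
    refine strictMonoOn_of_deriv_pos (convex_Icc a b) hc ?_
    intro t ht
    have ht' := interior_subset ht
    rw [(hψ t ht').deriv]
    exact hψd_pos t ht'
  have hL : 0 < ψ b - ψ a := sub_pos.2 (hm ha hb hab)
  have hGam : 0 < Real.Gamma (α + β) := Real.Gamma_pos_of_pos (by linarith)
  have hGmax : 0 < (ψ b - ψ a) ^ (α + β - 1) / Real.Gamma (α + β) :=
    div_pos (Real.rpow_pos_of_pos hL _) hGam
  have hGb := aux_G_bound a b α β ψ hab hβ0 hαβ hm
  set Gm := (ψ b - ψ a) ^ (α + β - 1) / Real.Gamma (α + β) with hGm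
  have hIoo : ∀ {t}, t ∈ Set.Ioo a b → t ∈ Set.Icc a b := fun h => Ioo_subset_Icc_self h
  -- continuity of `f t`
  have hf_cont : ∀ t ∈ Set.Ioo a b, Continuous (f t) := by
    intro t ht
    rw [Metric.continuous_iff]
    intro u ε hε
    have hk := hκ₂_nonneg t ht
    obtain ⟨δ, hδ, h⟩ := hΦ_small (ε / (κ₂ t + 1)) (by positivity)
    refine ⟨δ, hδ, fun v hv => ?_⟩
    have h1 := h v u hv
    have h2 := hf_lip t ht v u
    rw [Real.dist_eq]
    have h3 : κ₂ t * |Φ v u| ≤ κ₂ t * (ε / (κ₂ t + 1)) := by gcongr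
    have h4 : κ₂ t * (ε / (κ₂ t + 1)) < ε := by
      rw [← mul_div_assoc, div_lt_iff₀ (by positivity)]
      nlinarith
    linarith
  -- measurability of the superposition
  have hmeas : ∀ x : ℝ → ℝ, ContinuousOn x (Set.Icc a b) →
      AEStronglyMeasurable (fun t => f t (x t)) (volume.restrict (Set.Ioo a b)) := by
    intro x hx
    have hx' : Continuous (Set.IccExtend hab.le ((Set.Icc a b).domRestrict x)) :=
      (continuousOn_iff_continuous_domRestrict.1 hx).Icc_extend'
    refine (aux_carath a b f _ hx'.measurable hf_meas hf_cont).congr ?_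
    refine (ae_restrict_iff' measurableSet_Ioo).2 (Filter.Eventually.of_forall ?_)
    intro t ht
    simp only [Set.IccExtend_of_mem hab.le _ (hIoo ht), Set.domRestrict_apply]
  have hmeasI : ∀ x : ℝ → ℝ, ContinuousOn x (Set.Icc a b) → ∀ t ∈ Set.Icc a b,
      AEStronglyMeasurable (fun τ => G a b α β ψ τ t * ψd τ * f τ (x τ))
        (volume.restrict (Set.Ioo a b)) := by
    intro x hx t ht
    refine AEStronglyMeasurable.mul ?_ (hmeas x hx)
    exact (((aux_G_cont_left a b α β ψ hβ0 hαβ hm hc t ht).mul hψd_cont).mono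
      Ioo_subset_Icc_self).aestronglyMeasurable measurableSet_Ioo
  have hIooc : ∀ g : ℝ → ℝ, IntervalIntegrable g volume a b ↔ IntegrableOn g (Set.Ioo a b) :=
    fun g => intervalIntegrable_iff_integrableOn_Ioo_of_le hab.le
  have hint_eq : ∀ g : ℝ → ℝ, ∫ τ in a..b, g τ = ∫ τ in Set.Ioo a b, g τ := fun g => by
    rw [intervalIntegral.integral_of_le hab.le, integral_Ioc_eq_integral_Ioo]
  have hbound : ∀ x : ℝ → ℝ, ContinuousOn x (Set.Icc a b) → ∃ M : ℝ, ∀ t ∈ Set.Icc a b,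
      ∀ τ ∈ Set.Ioo a b, ‖G a b α β ψ τ t * ψd τ * f τ (x τ)‖ ≤ M * (ψd τ * κ₁ τ) := by
    intro x hx
    obtain ⟨R, hR⟩ := isCompact_Icc.exists_bound_of_continuousOn hx
    have hR0 : 0 ≤ R := (norm_nonneg _).trans (hR a ha)
    refine ⟨Gm * Ψ R, fun t ht τ hτ => ?_⟩
    have h1 := hGb τ t (hIoo hτ) ht
    have h2 := hψd_pos τ (hIoo hτ)
    have h3 := hf_growth τ hτ (x τ)
    have h4 : Ψ |x τ| ≤ Ψ R := hΨ_mono (Set.mem_Ici.2 (abs_nonneg _)) (Set.mem_Ici.2 hR0) (hR τ (hIoo hτ))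
    have hk := hκ₁_nonneg τ hτ
    rw [Real.norm_eq_abs, abs_mul, abs_mul, abs_of_pos h2]
    calc |G a b α β ψ τ t| * ψd τ * |f τ (x τ)| ≤ Gm * ψd τ * (κ₁ τ * Ψ R) := by
          refine mul_le_mul (by gcongr) (h3.trans (by gcongr)) (abs_nonneg _) (by positivity)
      _ = _ := by ring
  have hintg : ∀ x : ℝ → ℝ, ContinuousOn x (Set.Icc a b) → ∀ t ∈ Set.Icc a b,
      IntegrableOn (fun τ => G a b α β ψ τ t * ψd τ * f τ (x τ)) (Set.Ioo a b) := by
    intro x hx t ht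
    obtain ⟨M, hM⟩ := hbound x hx
    refine Integrable.mono' (((hIooc _).1 hκ₁_int).const_mul M) (hmeasI x hx t ht) ?_
    exact (ae_restrict_iff' measurableSet_Ioo).2 (Filter.Eventually.of_forall (hM t ht))
  have hΦc : ∀ x y : ℝ → ℝ, ContinuousOn x (Set.Icc a b) → ContinuousOn y (Set.Icc a b) →
      ContinuousOn (fun τ => Φ (x τ) (y τ)) (Set.Icc a b) := fun x y hx hy =>
    hΦ_cont.comp_continuousOn (hx.prodMk hy)
  have hI0 : 0 ≤ ∫ τ in a..b, ψd τ * κ₂ τ := by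
    rw [hint_eq]
    exact setIntegral_nonneg measurableSet_Ioo
      (fun τ hτ => mul_nonneg (hψd_pos τ (hIoo hτ)).le (hκ₂_nonneg τ hτ))
  have part2 : ∀ x y : ℝ → ℝ, ContinuousOn x (Set.Icc a b) → ContinuousOn y (Set.Icc a b) →
      supNorm a b (fun t => Sop a b α β ψ ψd f 𝒢 x t - Sop a b α β ψ ψd f 𝒢 y t) ≤
        |𝒢 x - 𝒢 y| + Gm *
          (⨆ τ : Set.Icc a b, |Φ (x ↑τ) (y ↑τ)|) * ∫ τ in a..b, ψd τ * κ₂ τ := by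
    intro x y hx hy
    refine ciSup_le ?_
    rintro ⟨t, ht⟩
    have hbd := aux_bdd a b _ (hΦc x y hx hy)
    set N := ⨆ τ : Set.Icc a b, |Φ (x ↑τ) (y ↑τ)| with hN
    have hΦN : ∀ τ ∈ Set.Icc a b, |Φ (x τ) (y τ)| ≤ N := fun τ hτ => le_ciSup hbd ⟨τ, hτ⟩
    have h1 := hm.monotoneOn ha ht ht.1
    have h2 := hm.monotoneOn ht hb ht.2
    have hq0 : 0 ≤ ((ψ t - ψ a) / (ψ b - ψ a)) ^ β :=
      Real.rpow_nonneg (div_nonneg (by linarith) hL.le) _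
    have hq1 : ((ψ t - ψ a) / (ψ b - ψ a)) ^ β ≤ 1 :=
      Real.rpow_le_one (div_nonneg (by linarith) hL.le)
        ((div_le_one hL).2 (by linarith)) hβ0.le
    have hdiff : Sop a b α β ψ ψd f 𝒢 x t - Sop a b α β ψ ψd f 𝒢 y t =
        ((ψ t - ψ a) / (ψ b - ψ a)) ^ β * (𝒢 x - 𝒢 y) +
        ∫ τ in Set.Ioo a b, (G a b α β ψ τ t * ψd τ * f τ (x τ) -
          G a b α β ψ τ t * ψd τ * f τ (y τ)) := by
      rw [integral_sub (hintg x hx t ht) (hintg y hy t ht)]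
      unfold Sop
      rw [hint_eq, hint_eq]
      ring
    have hI : |∫ τ in Set.Ioo a b, (G a b α β ψ τ t * ψd τ * f τ (x τ) -
          G a b α β ψ τ t * ψd τ * f τ (y τ))| ≤
        ∫ τ in Set.Ioo a b, Gm * N * (ψd τ * κ₂ τ) := by
      rw [← Real.norm_eq_abs]
      refine norm_integral_le_of_norm_le (((hIooc _).1 hκ₂_int).const_mul _) ?_
      refine (ae_restrict_iff' measurableSet_Ioo).2 (Filter.Eventually.of_forall ?_)
      intro τ hτ
      have k1 := hGb τ t (hIoo hτ) ht
      have k2 := hψd_pos τ (hIoo hτ)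
      have k3 := hf_lip τ hτ (x τ) (y τ)
      have k4 := hΦN τ (hIoo hτ)
      have hk := hκ₂_nonneg τ hτ
      rw [← mul_sub, Real.norm_eq_abs, abs_mul, abs_mul, abs_of_pos k2]
      calc |G a b α β ψ τ t| * ψd τ * |f τ (x τ) - f τ (y τ)| ≤ Gm * ψd τ * (κ₂ τ * N) := by
            refine mul_le_mul (by gcongr) (k3.trans (by gcongr)) (abs_nonneg _) (by positivity)
        _ = _ := by ring
    rw [integral_const_mul] at hI
    show |Sop a b α β ψ ψd f 𝒢 x t - Sop a b α β ψ ψd f 𝒢 y t| ≤ _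
    rw [hdiff, hint_eq]
    refine (abs_add_le _ _).trans (add_le_add ?_ hI)
    rw [abs_mul, abs_of_nonneg hq0]
    exact mul_le_of_le_one_left (abs_nonneg _) hq1
  refine ⟨?_, part2, ?_⟩
  · intro x hx
    obtain ⟨M, hM⟩ := hbound x hx
    unfold Sop
    refine ContinuousOn.add (ContinuousOn.mul ?_ continuousOn_const) ?_
    · exact ((hc.sub continuousOn_const).div_const _).rpow_const (fun _ _ => Or.inr hβ0.le)
    · simp only [hint_eq]
      intro t₀ ht₀
      refine continuousWithinAt_of_dominated (bound := fun τ => M * (ψd τ * κ₁ τ)) ?_ ?_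
        (((hIooc _).1 hκ₁_int).const_mul M) ?_
      · filter_upwards [self_mem_nhdsWithin] with t ht using hmeasI x hx t ht
      · filter_upwards [self_mem_nhdsWithin] with t ht
        exact (ae_restrict_iff' measurableSet_Ioo).2 (Filter.Eventually.of_forall (hM t ht))
      · refine (ae_restrict_iff' measurableSet_Ioo).2 (Filter.Eventually.of_forall ?_)
        intro τ hτ
        exact (((aux_G_cont_right a b α β ψ hβ0 hαβ hm hc τ (hIoo hτ)).mul
          continuousOn_const).mul continuousOn_const) t₀ ht₀
  · intro x hx ε hε
    set I := ∫ τ in a..b, ψd τ * κ₂ τ with hI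
    obtain ⟨δ₁, hδ₁, h1⟩ := h𝒢_cont x hx (ε / 2) (by positivity)
    obtain ⟨δ₂, hδ₂, h2⟩ := hΦ_small (ε / (2 * (Gm * I + 1))) (by positivity)
    refine ⟨min δ₁ δ₂, lt_min hδ₁ hδ₂, fun y hy hxy => ?_⟩
    have k1 := h1 y hy (hxy.trans_le (min_le_left _ _))
    have hbd := aux_bdd a b _ (hx.sub hy)
    have k2 : (⨆ τ : Set.Icc a b, |Φ (x ↑τ) (y ↑τ)|) ≤ ε / (2 * (Gm * I + 1)) := by
      refine ciSup_le fun τ => (h2 _ _ ?_).le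
      exact lt_of_le_of_lt (le_ciSup hbd τ) (hxy.trans_le (min_le_right _ _))
    have k3 := part2 x y hx hy
    have k4 : Gm * (⨆ τ : Set.Icc a b, |Φ (x ↑τ) (y ↑τ)|) * I ≤
        Gm * (ε / (2 * (Gm * I + 1))) * I := by gcongr
    have k5 : Gm * (ε / (2 * (Gm * I + 1))) * I ≤ ε / 2 := by
      have hp : 0 < Gm * I + 1 := by positivity
      have : Gm * (ε / (2 * (Gm * I + 1))) * I = (ε / 2) * (Gm * I / (Gm * I + 1)) := by
        field_simp
      rw [this]
      refine mul_le_of_le_one_right (by positivity) ((div_le_one hp).2 (by linarith))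
    linarith
end

section
/- (Contraction estimate) Suppose |f(t,x) − f(t,y)| ≤ κ₃(t)·|x−y| for all t ∈ (a,b) and x, y ∈ ℝ, where κ₃: (a,b) → [0,∞) is measurable with ψ'·κ₃ ∈ L¹(a,b); |𝒢(x) − 𝒢(y)| ≤ κ₄·‖x−y‖ for all x, y ∈ C([a,b],ℝ) with κ₄ ∈ (0,1); f(·,u) is measurable for each u ∈ ℝ; and t ↦ ψ'(t)·f(t,0) is in L¹(a,b). Then S maps C([a,b],ℝ) into itself and for all x, y ∈ C([a,b],ℝ): ‖Sx − Sy‖ ≤ (κ₄ + G_max·∫_a^b ψ'(τ)κ₃(τ) dτ)·‖x−y‖, where G_max = L^{α+β−1}/Γ(α+β). -/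
open MeasureTheory Set

lemma supNorm_bdd {a b : ℝ} {x : ℝ → ℝ} (hx : ContinuousOn x (Set.Icc a b)) :
    BddAbove (Set.range fun t : Set.Icc a b => |x ↑t|) := by
  have h := isCompact_Icc.bddAbove_image (hx.abs)
  have e : (Set.range fun t : Set.Icc a b => |x ↑t|) = (fun t => |x t|) '' Set.Icc a b := by
    ext y; simp
  rw [e]; exact h

lemma le_supNorm {a b : ℝ} {x : ℝ → ℝ} (hx : ContinuousOn x (Set.Icc a b)) {t : ℝ}
    (ht : t ∈ Set.Icc a b) : |x t| ≤ supNorm a b x :=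
  le_ciSup (supNorm_bdd hx) (⟨t, ht⟩ : Set.Icc a b)

lemma supNorm_nonneg (a b : ℝ) (x : ℝ → ℝ) : 0 ≤ supNorm a b x :=
  Real.iSup_nonneg fun _ => abs_nonneg _

lemma G_closed {a b α β : ℝ} {ψ : ℝ → ℝ} (hαβ : 1 < α + β)
    (hm : MonotoneOn ψ (Set.Icc a b)) {τ t : ℝ} (hτ : τ ∈ Set.Icc a b) (ht : t ∈ Set.Icc a b) :
    G a b α β ψ τ t = (ψ t - ψ a) ^ β * (ψ b - ψ τ) ^ (α + β - 1) /
        (Real.Gamma (α + β) * (ψ b - ψ a) ^ β) -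
      (max (ψ t - ψ τ) 0) ^ (α + β - 1) / Real.Gamma (α + β) := by
  unfold G
  split_ifs with h
  · rw [max_eq_left (sub_nonneg.2 (hm hτ ht h))]
  · rw [max_eq_right (sub_nonpos.2 (hm ht hτ (not_le.1 h).le)),
      Real.zero_rpow (by linarith)]
    simp

lemma G_bound {a b α β : ℝ} {ψ : ℝ → ℝ} (hab : a < b) (hβ0 : 0 < β) (hαβ : 1 < α + β)
    (hm : StrictMonoOn ψ (Set.Icc a b)) {τ t : ℝ} (hτ : τ ∈ Set.Icc a b)
    (ht : t ∈ Set.Icc a b) :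
    |G a b α β ψ τ t| ≤ (ψ b - ψ a) ^ (α + β - 1) / Real.Gamma (α + β) := by
  rw [G_closed hαβ hm.monotoneOn hτ ht]
  have ha : a ∈ Set.Icc a b := left_mem_Icc.2 hab.le
  have hb : b ∈ Set.Icc a b := right_mem_Icc.2 hab.le
  have hL : 0 < ψ b - ψ a := sub_pos.2 (hm ha hb hab)
  have hΓ : 0 < Real.Gamma (α + β) := Real.Gamma_pos_of_pos (by linarith)
  have h1 := hm.monotoneOn ha ht ht.1
  have h2 := hm.monotoneOn ht hb ht.2
  have h3 := hm.monotoneOn ha hτ hτ.1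
  have h4 := hm.monotoneOn hτ hb hτ.2
  have hLβ : 0 < (ψ b - ψ a) ^ β := Real.rpow_pos_of_pos hL _
  have hγ : 0 ≤ α + β - 1 := by linarith
  have A0 : 0 ≤ (ψ t - ψ a) ^ β * (ψ b - ψ τ) ^ (α + β - 1) /
        (Real.Gamma (α + β) * (ψ b - ψ a) ^ β) := by
    have := Real.rpow_nonneg (sub_nonneg.2 h1) β
    have := Real.rpow_nonneg (sub_nonneg.2 h4) (α + β - 1)
    positivity
  have A1 : (ψ t - ψ a) ^ β * (ψ b - ψ τ) ^ (α + β - 1) /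
        (Real.Gamma (α + β) * (ψ b - ψ a) ^ β) ≤
      (ψ b - ψ a) ^ (α + β - 1) / Real.Gamma (α + β) := by
    have e1 : (ψ t - ψ a) ^ β ≤ (ψ b - ψ a) ^ β :=
      Real.rpow_le_rpow (by linarith) (by linarith) hβ0.le
    have e2 : (ψ b - ψ τ) ^ (α + β - 1) ≤ (ψ b - ψ a) ^ (α + β - 1) :=
      Real.rpow_le_rpow (by linarith) (by linarith) hγ
    have e3 := mul_le_mul e1 e2 (Real.rpow_nonneg (sub_nonneg.2 h4) _) hLβ.le
    rw [div_le_div_iff₀ (by positivity) hΓ]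
    nlinarith
  have B0 : 0 ≤ (max (ψ t - ψ τ) 0) ^ (α + β - 1) / Real.Gamma (α + β) :=
    div_nonneg (Real.rpow_nonneg (le_max_right _ _) _) hΓ.le
  have B1 : (max (ψ t - ψ τ) 0) ^ (α + β - 1) / Real.Gamma (α + β) ≤
      (ψ b - ψ a) ^ (α + β - 1) / Real.Gamma (α + β) := by
    gcongr
    exact max_le (by linarith) hL.le
  rw [abs_le]; constructor <;> linarith

lemma caratheodory {μ : Measure ℝ} {f : ℝ → ℝ → ℝ} {x : ℝ → ℝ}
    (hf : ∀ u, AEStronglyMeasurable (fun t => f t u) μ)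
    (hc : ∀ᵐ t ∂μ, Continuous (f t)) (hx : Measurable x) :
    AEStronglyMeasurable (fun t => f t (x t)) μ := by
  have key : ∀ n : ℕ, AEMeasurable
      (fun t => f t ((⌊x t * ((n : ℝ) + 1)⌋ : ℝ) / ((n : ℝ) + 1))) μ := by
    intro n
    have hex : ∀ k : ℤ, ∃ g : ℝ → ℝ, Measurable g ∧
        ∀ᵐ t ∂μ, f t ((k : ℝ) / ((n : ℝ) + 1)) = g t := fun k =>
      (hf ((k : ℝ) / ((n : ℝ) + 1))).aemeasurable
    choose g hg hge using hex
    have h2 : Measurable fun t => ⌊x t * ((n : ℝ) + 1)⌋ := (hx.mul_const _).floor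
    generalize hk : (fun t => ⌊x t * ((n : ℝ) + 1)⌋) = k at h2
    have hk' : ∀ t, ⌊x t * ((n : ℝ) + 1)⌋ = k t := fun t => congrFun hk t
    simp only [hk']
    refine ⟨fun t => g (k t) t, ?_, ?_⟩
    · have h3 : Measurable (fun p : ℝ × ℤ => g p.2 p.1) :=
        measurable_from_prod_countable_left hg
      exact h3.comp (measurable_id.prodMk h2)
    · filter_upwards [ae_all_iff.2 hge] with t h
      exact h _
  refine (aemeasurable_of_tendsto_metrizable_ae Filter.atTop key ?_).aestronglyMeasurable
  filter_upwards [hc] with t ht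
  refine (ht.tendsto (x t)).comp ?_
  have h1 : Filter.Tendsto (fun n : ℕ => x t - 1 / ((n : ℝ) + 1)) Filter.atTop (nhds (x t)) := by
    simpa using (tendsto_const_nhds (x := x t)).sub (tendsto_one_div_add_atTop_nhds_zero_nat (𝕜 := ℝ))
  refine tendsto_of_tendsto_of_tendsto_of_le_of_le h1 tendsto_const_nhds ?_ ?_
  · intro n
    have hn : (0 : ℝ) < (n : ℝ) + 1 := by positivity
    have := Int.lt_floor_add_one (x t * ((n : ℝ) + 1))
    show x t - 1 / ((n : ℝ) + 1) ≤ _ / _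
    rw [le_div_iff₀ hn, sub_mul, one_div, inv_mul_cancel₀ hn.ne']
    linarith
  · intro n
    have hn : (0 : ℝ) < (n : ℝ) + 1 := by positivity
    show _ / _ ≤ _
    rw [div_le_iff₀ hn]
    exact Int.floor_le _

theorem solution_operator_contraction_estimate
    (a b α β κ₄ : ℝ) (hab : a < b)
    (hα0 : 0 < α) (hα1 : α ≤ 1) (hβ0 : 0 < β) (hβ1 : β ≤ 1) (hαβ : 1 < α + β)
    (ψ ψd : ℝ → ℝ)
    (hψ : ∀ t ∈ Set.Icc a b, HasDerivAt ψ (ψd t) t)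
    (hψd_cont : ContinuousOn ψd (Set.Icc a b))
    (hψd_pos : ∀ t ∈ Set.Icc a b, 0 < ψd t)
    (f : ℝ → ℝ → ℝ) (𝒢 : (ℝ → ℝ) → ℝ) (κ₃ : ℝ → ℝ)
    (hκ₃_meas : AEStronglyMeasurable κ₃ (volume.restrict (Set.Ioo a b)))
    (hκ₃_nonneg : ∀ t ∈ Set.Ioo a b, 0 ≤ κ₃ t)
    (hκ₃_int : IntervalIntegrable (fun t => ψd t * κ₃ t) volume a b)
    (hf_lip : ∀ t ∈ Set.Ioo a b, ∀ u v : ℝ, |f t u - f t v| ≤ κ₃ t * |u - v|)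
    (hκ₄0 : 0 < κ₄) (hκ₄1 : κ₄ < 1)
    (h𝒢_lip : ∀ x y : ℝ → ℝ, ContinuousOn x (Set.Icc a b) →
      ContinuousOn y (Set.Icc a b) →
      |𝒢 x - 𝒢 y| ≤ κ₄ * supNorm a b (fun t => x t - y t))
    (hf_meas : ∀ u : ℝ,
      AEStronglyMeasurable (fun t => f t u) (volume.restrict (Set.Ioo a b)))
    (hf0_int : IntervalIntegrable (fun t => ψd t * f t 0) volume a b) :
    (∀ x : ℝ → ℝ, ContinuousOn x (Set.Icc a b) →
      ContinuousOn (Sop a b α β ψ ψd f 𝒢 x) (Set.Icc a b)) ∧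
    ∀ x y : ℝ → ℝ, ContinuousOn x (Set.Icc a b) → ContinuousOn y (Set.Icc a b) →
      supNorm a b (fun t => Sop a b α β ψ ψd f 𝒢 x t - Sop a b α β ψ ψd f 𝒢 y t) ≤
        (κ₄ + (ψ b - ψ a) ^ (α + β - 1) / Real.Gamma (α + β) *
          ∫ τ in a..b, ψd τ * κ₃ τ) * supNorm a b (fun t => x t - y t) := by
  have hsm : StrictMonoOn ψ (Set.Icc a b) := by
    refine strictMonoOn_of_deriv_pos (convex_Icc a b)
      (fun t ht => (hψ t ht).continuousAt.continuousWithinAt) ?_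
    intro t ht
    have ht' := interior_subset ht
    rw [(hψ t ht').deriv]; exact hψd_pos t ht'
  have hψc : ContinuousOn ψ (Set.Icc a b) :=
    fun t ht => (hψ t ht).continuousAt.continuousWithinAt
  have ha : a ∈ Set.Icc a b := left_mem_Icc.2 hab.le
  have hb : b ∈ Set.Icc a b := right_mem_Icc.2 hab.le
  have hL : 0 < ψ b - ψ a := sub_pos.2 (hsm ha hb hab)
  have hΓ : 0 < Real.Gamma (α + β) := Real.Gamma_pos_of_pos (by linarith)
  have hγ : 0 ≤ α + β - 1 := by linarith
  set M := (ψ b - ψ a) ^ (α + β - 1) / Real.Gamma (α + β) with hM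
  have hM0 : 0 ≤ M := div_nonneg (Real.rpow_nonneg hL.le _) hΓ.le
  have hGb : ∀ τ ∈ Set.Icc a b, ∀ t ∈ Set.Icc a b, |G a b α β ψ τ t| ≤ M :=
    fun τ hτ t ht => G_bound hab hβ0 hαβ hsm hτ ht
  -- everything on the open interval
  have hκi : Integrable (fun t => ψd t * κ₃ t) (volume.restrict (Set.Ioo a b)) :=
    ((intervalIntegrable_iff_integrableOn_Ioo_of_le hab.le).1 hκ₃_int)
  have hf0i : Integrable (fun t => ψd t * f t 0) (volume.restrict (Set.Ioo a b)) :=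
    ((intervalIntegrable_iff_integrableOn_Ioo_of_le hab.le).1 hf0_int)
  have hconv : ∀ g : ℝ → ℝ, ∫ τ in a..b, g τ = ∫ τ in Set.Ioo a b, g τ := fun g => by
    rw [intervalIntegral.integral_of_le hab.le, integral_Ioc_eq_integral_Ioo]
  have hmem : ∀ᵐ τ ∂(volume.restrict (Set.Ioo a b)), τ ∈ Set.Ioo a b :=
    ae_restrict_mem measurableSet_Ioo
  have hψdm : AEStronglyMeasurable ψd (volume.restrict (Set.Ioo a b)) :=
    (hψd_cont.mono Ioo_subset_Icc_self).aestronglyMeasurable measurableSet_Ioo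
  have hfx : ∀ x : ℝ → ℝ, ContinuousOn x (Set.Icc a b) →
      AEStronglyMeasurable (fun τ => f τ (x τ)) (volume.restrict (Set.Ioo a b)) := by
    intro x hx
    have hx' : Continuous (Set.IccExtend hab.le ((Set.Icc a b).domRestrict x)) :=
      (continuousOn_iff_continuous_domRestrict.1 hx).Icc_extend'
    have hc : ∀ᵐ t ∂(volume.restrict (Set.Ioo a b)), Continuous (f t) := by
      filter_upwards [hmem] with t ht
      refine (LipschitzWith.of_dist_le_mul (K := ⟨κ₃ t, hκ₃_nonneg t ht⟩) ?_).continuous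
      intro u v
      exact hf_lip t ht u v
    refine (caratheodory hf_meas hc hx'.measurable).congr ?_
    filter_upwards [hmem] with t ht
    rw [Set.IccExtend_of_mem _ _ (Ioo_subset_Icc_self ht)]
    rfl
  have hhi : ∀ x : ℝ → ℝ, ContinuousOn x (Set.Icc a b) →
      Integrable (fun τ => ψd τ * f τ (x τ)) (volume.restrict (Set.Ioo a b)) := by
    intro x hx
    refine (hf0i.norm.add (hκi.mul_const (supNorm a b x))).mono' (hψdm.mul (hfx x hx)) ?_
    filter_upwards [hmem] with τ hτ
    have hτ' := Ioo_subset_Icc_self hτ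
    have h1 := hf_lip τ hτ (x τ) 0
    have h2 := le_supNorm hx hτ'
    have h3 := hψd_pos τ hτ'
    have h4 := hκ₃_nonneg τ hτ
    have h5 : |f τ (x τ)| ≤ |f τ 0| + κ₃ τ * supNorm a b x := by
      have := abs_sub_abs_le_abs_sub (f τ (x τ)) (f τ 0)
      rw [sub_zero] at h1
      have := mul_le_mul_of_nonneg_left h2 h4
      linarith
    simp only [Pi.add_apply, Real.norm_eq_abs, abs_mul, abs_of_pos h3]
    have := mul_le_mul_of_nonneg_left h5 h3.le
    linarith
  have hGm : ∀ t ∈ Set.Icc a b, AEStronglyMeasurable (fun τ => G a b α β ψ τ t)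
      (volume.restrict (Set.Ioo a b)) := by
    intro t ht
    have hc : ContinuousOn (fun τ => G a b α β ψ τ t) (Set.Icc a b) := by
      refine ContinuousOn.congr ?_ (fun τ hτ => G_closed hαβ hsm.monotoneOn hτ ht)
      refine ContinuousOn.sub (ContinuousOn.div_const (continuousOn_const.mul ?_) _)
        (ContinuousOn.div_const ?_ _)
      · exact (continuousOn_const.sub hψc).rpow_const fun _ _ => Or.inr hγ
      · exact ((continuousOn_const.sub hψc).sup continuousOn_const).rpow_const
          fun _ _ => Or.inr hγ
    exact (hc.mono Ioo_subset_Icc_self).aestronglyMeasurable measurableSet_Ioo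
  have hGt : ∀ τ ∈ Set.Icc a b, ContinuousOn (fun t => G a b α β ψ τ t) (Set.Icc a b) := by
    intro τ hτ
    refine ContinuousOn.congr ?_ (fun t ht => G_closed hαβ hsm.monotoneOn hτ ht)
    refine ContinuousOn.sub (ContinuousOn.div_const (ContinuousOn.mul ?_ continuousOn_const) _)
      (ContinuousOn.div_const ?_ _)
    · exact (hψc.sub continuousOn_const).rpow_const fun _ _ => Or.inr hβ0.le
    · exact ((hψc.sub continuousOn_const).sup continuousOn_const).rpow_const
        fun _ _ => Or.inr hγ
  have hGi : ∀ x : ℝ → ℝ, ContinuousOn x (Set.Icc a b) → ∀ t ∈ Set.Icc a b,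
      Integrable (fun τ => G a b α β ψ τ t * ψd τ * f τ (x τ))
        (volume.restrict (Set.Ioo a b)) := by
    intro x hx t ht
    simp only [mul_assoc]
    refine (hhi x hx).bdd_mul (c := M) (hGm t ht) ?_
    filter_upwards [hmem] with τ hτ
    exact hGb τ (Ioo_subset_Icc_self hτ) t ht
  constructor
  · intro x hx
    unfold Sop
    simp only [hconv]
    refine ContinuousOn.add (ContinuousOn.mul ?_ continuousOn_const) ?_
    · exact ((hψc.sub continuousOn_const).div_const _).rpow_const fun _ _ => Or.inr hβ0.le
    · intro t₀ ht₀
      refine continuousWithinAt_of_dominated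
        (bound := fun τ => M * ‖ψd τ * f τ (x τ)‖) ?_ ?_ ((hhi x hx).norm.const_mul M) ?_
      · filter_upwards [self_mem_nhdsWithin] with t ht
        exact (hGi x hx t ht).aestronglyMeasurable
      · filter_upwards [self_mem_nhdsWithin] with t ht
        filter_upwards [hmem] with τ hτ
        rw [mul_assoc, norm_mul]
        exact mul_le_mul_of_nonneg_right (hGb τ (Ioo_subset_Icc_self hτ) t ht) (norm_nonneg _)
      · filter_upwards [hmem] with τ hτ
        exact ((hGt τ (Ioo_subset_Icc_self hτ) t₀ ht₀).mul continuousWithinAt_const).mul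
          continuousWithinAt_const
  · intro x y hx hy
    set N := supNorm a b (fun t => x t - y t) with hN
    have hN0 : 0 ≤ N := supNorm_nonneg _ _ _
    have : Nonempty (Set.Icc a b) := ⟨⟨a, ha⟩⟩
    refine ciSup_le ?_
    rintro ⟨t, ht⟩
    show |Sop a b α β ψ ψd f 𝒢 x t - Sop a b α β ψ ψd f 𝒢 y t| ≤ _
    unfold Sop
    simp only [hconv]
    have hs0 : 0 ≤ (ψ t - ψ a) / (ψ b - ψ a) :=
      div_nonneg (sub_nonneg.2 (hsm.monotoneOn ha ht ht.1)) hL.le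
    have hs1 : (ψ t - ψ a) / (ψ b - ψ a) ≤ 1 := by
      rw [div_le_one hL]
      linarith [hsm.monotoneOn ht hb ht.2]
    have hp0 := Real.rpow_nonneg hs0 β
    have hp1 := Real.rpow_le_one hs0 hs1 hβ0.le
    have h1 : |((ψ t - ψ a) / (ψ b - ψ a)) ^ β * (𝒢 x - 𝒢 y)| ≤ κ₄ * N := by
      rw [abs_mul, abs_of_nonneg hp0]
      exact (mul_le_of_le_one_left (abs_nonneg _) hp1).trans (h𝒢_lip x y hx hy)
    have h2 : |∫ τ in Set.Ioo a b, (G a b α β ψ τ t * ψd τ * f τ (x τ) -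
        G a b α β ψ τ t * ψd τ * f τ (y τ))| ≤
        ∫ τ in Set.Ioo a b, M * N * (ψd τ * κ₃ τ) := by
      rw [← Real.norm_eq_abs]
      refine norm_integral_le_of_norm_le (hκi.const_mul _) ?_
      filter_upwards [hmem] with τ hτ
      have hτ' := Ioo_subset_Icc_self hτ
      have e1 := hf_lip τ hτ (x τ) (y τ)
      have e2 : |x τ - y τ| ≤ N := le_supNorm (hx.sub hy) hτ'
      have e3 := hψd_pos τ hτ'
      have e4 := hκ₃_nonneg τ hτ
      have e5 := hGb τ hτ' t ht
      rw [← mul_sub, mul_assoc, Real.norm_eq_abs, abs_mul, abs_mul, abs_of_pos e3]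
      have e6 : ψd τ * |f τ (x τ) - f τ (y τ)| ≤ ψd τ * (κ₃ τ * N) :=
        mul_le_mul_of_nonneg_left (e1.trans (mul_le_mul_of_nonneg_left e2 e4)) e3.le
      calc _ ≤ M * (ψd τ * (κ₃ τ * N)) := mul_le_mul e5 e6 (by positivity) hM0
        _ = _ := by ring
    rw [integral_sub (hGi x hx t ht) (hGi y hy t ht), integral_const_mul] at h2
    calc _ = |((ψ t - ψ a) / (ψ b - ψ a)) ^ β * (𝒢 x - 𝒢 y) +
          ((∫ τ in Set.Ioo a b, G a b α β ψ τ t * ψd τ * f τ (x τ)) -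
          ∫ τ in Set.Ioo a b, G a b α β ψ τ t * ψd τ * f τ (y τ))| := by
          congr 1; ring
      _ ≤ _ := (abs_add_le _ _).trans (add_le_add h1 h2)
      _ = _ := by ring
end
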